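/- The set {(f,T) ∈ 𝓒^1 × 𝓔^1 : Ω(f,T) is a periodic orbit of T} is an open subset of 𝓒^1 × 𝓔^1. -/

import Mathlib

/-!
Write `φ = f - β(f, T)`. For an expanding map, every orbit segment is shadowed by a periodic orbit
and by a segment ending at a prescribed point, with total error proportional to the gap. As `φ` has
no positive periodic sum, its Birkhoff sums are bounded above, and their supremum over the segments
ending at `x` is a Lipschitz function `g` of `x` with `g + φ ≤ g ∘ T`. The constants involved
(expansion, Lipschitz and shadowing constants) can be chosen uniformly on a `C^1`-neighbourhood.

Let `Ω(f, T)` be a periodic orbit `O`. The main point is that `Ω(f', T')` lies in a small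
neighbourhood of `O` for all nearby `(f', T')`. Through every point of `Ω(f', T')` there is a
two-sided orbit along which `g' + φ' = g' ∘ T'`. Along an ultrafilter the functions `g'` and these
orbits converge, so otherwise the limit would be a two-sided orbit of `T` leaving `O` on which
`g + φ = g ∘ T`. But its limit points in the past and in the future belong to `Ω(f, T) = O`; as `O`
is a single periodic orbit, the limit orbit closes up with arbitrarily small loss of Birkhoff sum,
and is therefore contained in `Ω(f, T)`.

Finally `Ω(f', T')` is nonempty and `T'`-invariant, and close to `O`, so all its points follow the
itinerary of a point of `O`. By expansiveness they form a single periodic orbit.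
-/

open MeasureTheory Topology Filter Set
open scoped UniformConvergence

noncomputable section

/-- The circle `ℝ/ℤ`. -/
abbrev Circle1 : Type := AddCircle (1 : ℝ)

/-- The canonical representative in `[0,1)` of a point of `ℝ/ℤ`. -/
noncomputable def rep (z : Circle1) : ℝ := (AddCircle.equivIco 1 0 z : ℝ)

/-- The circle map induced by a lift `F : ℝ → ℝ`. -/
noncomputable def cmap (F : ℝ → ℝ) : Circle1 → Circle1 := fun z => ((F (rep z) : ℝ) : Circle1)

/-- The data determining the `C^r` topology: all derivatives of order `≤ r`, viewed in the
space of functions `ℝ → ℝ` with the uniform-convergence topology. -/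
noncomputable def crSeq (r : ℕ∞) (f : ℝ → ℝ) : ℕ → (ℝ →ᵤ ℝ) :=
  fun k => UniformFun.ofFun (if (k : ℕ∞) ≤ r then iteratedDeriv k f else 0)

/-- The space `𝓒^r` of `C^r` functions `ℝ/ℤ → ℝ`. -/
def CrFun (r : ℕ∞) : Type := {f : Circle1 → ℝ // ContDiff ℝ r fun x : ℝ => f ↑x}

/-- The `C^r` topology on `𝓒^r`. -/
noncomputable instance (r : ℕ∞) : TopologicalSpace (CrFun r) :=
  TopologicalSpace.induced (fun f : CrFun r => crSeq r fun x : ℝ => f.1 ↑x) inferInstance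

/-- `F : ℝ → ℝ` is a lift of a `C^r` expanding circle map: it is `C^r`, sends `x+1` to
`F x + d` for a fixed integer `d`, and `|(Fⁿ)'| ≥ C λⁿ` for some `C > 0`, `λ > 1`. -/
def ExpandingLift (r : ℕ∞) (F : ℝ → ℝ) : Prop :=
  ContDiff ℝ r F ∧ (∃ d : ℤ, ∀ x : ℝ, F (x + 1) = F x + d) ∧
    ∃ C > (0 : ℝ), ∃ l > (1 : ℝ), ∀ n : ℕ, 1 ≤ n → ∀ x : ℝ, C * l ^ n ≤ |deriv (F^[n]) x|

/-- The space `𝓔^r` of (lifts of) `C^r` expanding circle maps, with the `C^r` topology. -/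
def ExpMap (r : ℕ∞) : Type := {F : ℝ → ℝ // ExpandingLift r F}

noncomputable instance (r : ℕ∞) : TopologicalSpace (ExpMap r) :=
  TopologicalSpace.induced (fun F : ExpMap r => crSeq r F.1) inferInstance

/-- `μ` is a `T`-invariant Borel probability measure. -/
def InvProb (T : Circle1 → Circle1) (μ : Measure Circle1) : Prop :=
  IsProbabilityMeasure μ ∧ μ.map T = μ

/-- `β(f,T)`, the maximal ergodic average. -/
noncomputable def beta (f : Circle1 → ℝ) (T : Circle1 → Circle1) : ℝ :=
  sSup ((fun μ : Measure Circle1 => ∫ x, f x ∂μ) '' {μ | InvProb T μ})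

/-- `μ` is a maximizing measure for `(f,T)`. -/
def IsMaximizing (f : Circle1 → ℝ) (T : Circle1 → Circle1) (μ : Measure Circle1) : Prop :=
  InvProb T μ ∧ ∫ x, f x ∂μ = beta f T

/-- `μ` is a periodic measure: an invariant measure supported on a periodic orbit. -/
def IsPeriodicMeasure (T : Circle1 → Circle1) (μ : Measure Circle1) : Prop :=
  InvProb T μ ∧ ∃ x : Circle1, ∃ n : ℕ, 0 < n ∧ T^[n] x = x ∧
    μ (Set.range fun k : ℕ => T^[k] x) = 1

/-- `(f,T)` is uniquely maximized by a periodic measure. -/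
def UniqMaxPeriodic (f : Circle1 → ℝ) (T : Circle1 → Circle1) : Prop :=
  ∃ μ : Measure Circle1, IsMaximizing f T μ ∧ IsPeriodicMeasure T μ ∧
    ∀ ν : Measure Circle1, IsMaximizing f T ν → ν = μ

/-- A (continuous) sub-action for `(f,T)`. -/
def IsSubaction (f : Circle1 → ℝ) (T : Circle1 → Circle1) (g : Circle1 → ℝ) : Prop :=
  Continuous g ∧ ∀ x, g x + f x ≤ g (T x) + beta f T

/-- A calibrated sub-action for `(f,T)`. -/
def IsCalibrated (f : Circle1 → ℝ) (T : Circle1 → Circle1) (g : Circle1 → ℝ) : Prop :=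
  IsSubaction f T g ∧ ∀ x, ∃ y, T y = x ∧ g y + f y = g x + beta f T

/-- `G_{f,T}`: the set of Lipschitz calibrated sub-actions of `(f,T)`. -/
def Gset (f : Circle1 → ℝ) (T : Circle1 → Circle1) : Set (Circle1 → ℝ) :=
  {g | (∃ K : NNReal, LipschitzWith K g) ∧ IsCalibrated f T g}

/-- The set `E_{f,T,g}`. -/
def Eset (f : Circle1 → ℝ) (T : Circle1 → Circle1) (g : Circle1 → ℝ) : Set Circle1 :=
  {x | g x + f x = g (T x) + beta f T}

/-- The set `Λ*_{f,T,g}`. -/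
def LambdaStar (f : Circle1 → ℝ) (T : Circle1 → Circle1) (g : Circle1 → ℝ) : Set Circle1 :=
  {x | ∀ n : ℕ, T^[n] x ∈ Eset f T g}

/-- The set `Λ_{f,T,g}`. -/
def Lambda (f : Circle1 → ℝ) (T : Circle1 → Circle1) (g : Circle1 → ℝ) : Set Circle1 :=
  ⋂ n : ℕ, T^[n] '' LambdaStar f T g

/-- The set `K(f,T)`. -/
def Kset (f : Circle1 → ℝ) (T : Circle1 → Circle1) : Set Circle1 :=
  ⋃ g ∈ Gset f T, Lambda f T g

/-- The `(f,T)`-non-wandering set `Ω(f,T)`. -/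
def OmegaSet (f : Circle1 → ℝ) (T : Circle1 → Circle1) : Set Circle1 :=
  {x | ∀ ε > (0 : ℝ), ∃ n : ℕ, 1 ≤ n ∧ ∃ z : Circle1, T^[n] z = x ∧ dist z x < ε ∧
    |∑ i ∈ Finset.range n, (f (T^[i] z) - beta f T)| < ε}

/-- `A` is a periodic orbit of `T`. -/
def IsPeriodicOrbit (T : Circle1 → Circle1) (A : Set Circle1) : Prop :=
  ∃ x : Circle1, (∃ n : ℕ, 0 < n ∧ T^[n] x = x) ∧ A = Set.range fun k : ℕ => T^[k] x

/-- `A` is a `T`-minimal set: a nonempty compact invariant set with no proper nonempty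
compact invariant subset. -/
def IsMinimalSet (T : Circle1 → Circle1) (A : Set Circle1) : Prop :=
  A.Nonempty ∧ IsCompact A ∧ T '' A ⊆ A ∧
    ∀ B ⊆ A, B.Nonempty → IsCompact B → T '' B ⊆ B → B = A

/-- The space of `C^r` families of functions on the circle with `q` parameters,
i.e. maps `(t,x) ↦ f_t(x)` that are jointly `C^r` (the circle variable via a lift). -/
def FamFun (r : ℕ∞) (q : ℕ) : Type :=
  {G : ((Fin q → ℝ) × ℝ) → ℝ // ContDiff ℝ r G ∧ ∀ t x, G (t, x + 1) = G (t, x)}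

noncomputable def famSeq (r : ℕ∞) (q : ℕ) (G : ((Fin q → ℝ) × ℝ) → ℝ) :
    (k : ℕ) → (((Fin q → ℝ) × ℝ) →ᵤ (((Fin q → ℝ) × ℝ) [×k]→L[ℝ] ℝ)) :=
  fun k => UniformFun.ofFun (if (k : ℕ∞) ≤ r then iteratedFDeriv ℝ k G else 0)

/-- The `C^r` topology on the space of `C^r` families. -/
noncomputable instance (r : ℕ∞) (q : ℕ) : TopologicalSpace (FamFun r q) :=
  TopologicalSpace.induced (fun G : FamFun r q => famSeq r q G.1) inferInstance

/-- The member `f_t : ℝ/ℤ → ℝ` of a family, at the parameter `t`. -/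
noncomputable def famMem {r : ℕ∞} {q : ℕ} (G : FamFun r q) (t : Fin q → ℝ) : Circle1 → ℝ :=
  fun z => G.1 (t, rep z)

/-- The product `m_∞` over `ℕ` of Lebesgue measure on `[0,1]`, realised as the pushforward of
the Haar probability measure of the compact group `(ℝ/ℤ)^ℕ` under the coordinatewise choice of
representatives in `[0,1)`. -/
noncomputable def mInfty : Measure (ℕ → ℝ) :=
  Measure.map (fun (t : ℕ → Circle1) (n : ℕ) => rep (t n))
    (MeasureTheory.Measure.addHaarMeasure (⊤ : TopologicalSpace.PositiveCompacts (ℕ → Circle1)))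

/-- `S` is an `N`-dimensionally shy subset of a normed real vector space `V`. -/
def NDimShy {V : Type*} [NormedAddCommGroup V] [NormedSpace ℝ V] (N : ℕ) (S : Set V) : Prop :=
  ∃ φ : Fin N → V, ∀ f : V,
    volume {t : Fin N → ℝ | (∀ i, t i ∈ Set.Icc (0 : ℝ) 1) ∧ f + ∑ i, t i • φ i ∈ S} = 0

/-- `S` is a finite dimensionally shy subset of a normed real vector space `V`. -/
def FinDimShy {V : Type*} [NormedAddCommGroup V] [NormedSpace ℝ V] (S : Set V) : Prop :=
  ∃ N : ℕ, 0 < N ∧ NDimShy N S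

/-- `S` is a shy subset of `V`: there are a compactly supported Borel probability measure `μ`
on `V` and a Borel set `S̃ ⊇ S` all of whose translates are `μ`-null. -/
def IsShy {V : Type*} [NormedAddCommGroup V] [NormedSpace ℝ V] (S : Set V) : Prop :=
  letI : MeasurableSpace V := borel V
  ∃ μ : Measure V, μ Set.univ = 1 ∧ (∃ K : Set V, IsCompact K ∧ μ K = 1) ∧
    ∃ St : Set V, MeasurableSet St ∧ S ⊆ St ∧
      ∀ v : V, μ ((fun x => x + v) ⁻¹' St) = 0

/-- `S` is a prevalent subset of `V`. -/
def IsPrevalent {V : Type*} [NormedAddCommGroup V] [NormedSpace ℝ V] (S : Set V) : Prop :=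
  IsShy Sᶜ

/-- `F` is the (normalized) lift of an orientation-preserving real analytic expanding circle
map of degree `d` fixing `π(0)`. -/
def AnalyticExpandingLift (F : ℝ → ℝ) (d : ℕ) : Prop :=
  (∀ x : ℝ, AnalyticAt ℝ F x) ∧ (∀ x : ℝ, F (x + 1) = F x + d) ∧ StrictMono F ∧ F 0 = 0 ∧
    2 ≤ d ∧ ∃ C > (0 : ℝ), ∃ l > (1 : ℝ), ∀ n : ℕ, 1 ≤ n → ∀ x : ℝ, C * l ^ n ≤ |deriv (F^[n]) x|

/-- The inverse branches `τ_{i,n} = τ_{i_n} ∘ ⋯ ∘ τ_{i_1}`, where `τ = F⁻¹` and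
`τ_i(x) = τ(x+i)`; the word `i` is indexed from `0`, so `i 0` is the first letter `i_1`. -/
noncomputable def tauIter (F : ℝ → ℝ) {d : ℕ} (i : ℕ → Fin d) : ℕ → ℝ → ℝ
  | 0, x => x
  | n + 1, x => Function.invFun F (tauIter F i n x + ((i n : ℕ) : ℝ))

/-- The function `h^f_i` associated to an infinite word `i`. -/
noncomputable def hSum (F : ℝ → ℝ) {d : ℕ} (i : ℕ → Fin d) (f : Circle1 → ℝ) : ℝ → ℝ :=
  fun x => ∑' n : ℕ,
    (f ((tauIter F i (n + 1) x : ℝ) : Circle1) - f ((tauIter F i (n + 1) 0 : ℝ) : Circle1))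

/-- The function `h^f_i` associated to a finite word of length `m` (the first `m` letters
of `i`). -/
noncomputable def hSumFin (F : ℝ → ℝ) {d : ℕ} (i : ℕ → Fin d) (m : ℕ) (f : Circle1 → ℝ) :
    ℝ → ℝ :=
  fun x => ∑ n ∈ Finset.range m,
    (f ((tauIter F i (n + 1) x : ℝ) : Circle1) - f ((tauIter F i (n + 1) 0 : ℝ) : Circle1))

/-- `i ∈ CL(x,K)`: all backward images of `x` along the word `i` lie over `K`. -/
def WordIn (F : ℝ → ℝ) {d : ℕ} (i : ℕ → Fin d) (x : ℝ) (K : Set Circle1) : Prop :=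
  ∀ n : ℕ, 1 ≤ n → ((tauIter F i n x : ℝ) : Circle1) ∈ K

/-- `x` (a real, lying over `K`) is an `f`-supercritical value of `K`. -/
def IsSupercriticalValue (F : ℝ → ℝ) (d : ℕ) (f : Circle1 → ℝ) (K : Set Circle1) (x : ℝ) :
    Prop :=
  ((x : ℝ) : Circle1) ∈ K ∧ ∃ i j : ℕ → Fin d, WordIn F i x K ∧ WordIn F j x K ∧ i 0 ≠ j 0 ∧
    deriv (hSum F i f) x = deriv (hSum F j f) x

/-- `x` is a critical value of `T|K`. -/
def IsCriticalValue (T : Circle1 → Circle1) (K : Set Circle1) (x : Circle1) : Prop :=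
  x ∈ K ∧ ∃ y z, y ∈ K ∧ z ∈ K ∧ y ≠ z ∧ T y = x ∧ T z = x

/-- A critical value `x` of `T|K` is regular: on each side of `x` there is a continuous
inverse branch of `T` selecting the unique preimage in `K`. -/
def IsRegularCriticalValue (T : Circle1 → Circle1) (K : Set Circle1) (x : Circle1) : Prop :=
  ∃ U : Set Circle1, U ∈ 𝓝 x ∧ IsConnected U ∧
    ∀ b ∈ U \ {x}, ∃ s : Circle1 → Circle1,
      ContinuousOn s (connectedComponentIn (U \ {x}) b) ∧
      (∀ y ∈ connectedComponentIn (U \ {x}) b, T (s y) = y) ∧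
      (∀ y ∈ K ∩ connectedComponentIn (U \ {x}) b, T ⁻¹' {y} ∩ K = {s y})

/-- `T|K` is Sturmian-like: every critical value is regular. -/
def SturmianLike (T : Circle1 → Circle1) (K : Set Circle1) : Prop :=
  ∀ x, IsCriticalValue T K x → IsRegularCriticalValue T K x

/-- `f : ℝ/ℤ → ℝ` is a trigonometric polynomial. -/
def IsTrigPoly (f : Circle1 → ℝ) : Prop :=
  ∃ m : ℕ, ∃ a b : ℕ → ℝ, ∀ x : ℝ,
    f ↑x = a 0 + ∑ k ∈ Finset.range m,
      (a (k + 1) * Real.cos (2 * Real.pi * (k + 1) * x) +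
        b (k + 1) * Real.sin (2 * Real.pi * (k + 1) * x))

end

open scoped NNReal

/-! ### Birkhoff sums and periodic orbits -/

section Birkhoff

variable {X : Type*} {T : X → X} {φ : X → ℝ}

theorem abs_birkhoffSum_sub_le [PseudoMetricSpace X] {K : ℝ≥0} (hφ : LipschitzWith K φ)
    (T : X → X) (n : ℕ) (x y : X) :
    |birkhoffSum T φ n x - birkhoffSum T φ n y| ≤
      K * ∑ i ∈ Finset.range n, dist (T^[i] x) (T^[i] y) := by
  rw [birkhoffSum, birkhoffSum, ← Finset.sum_sub_distrib, Finset.mul_sum]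
  exact (Finset.abs_sum_le_sum_abs _ _).trans (Finset.sum_le_sum fun i _ => hφ.dist_le_mul _ _)

theorem birkhoffSum_sub_const (T : X → X) (φ : X → ℝ) (c : ℝ) (n : ℕ) (x : X) :
    birkhoffSum T (fun x => φ x - c) n x = birkhoffSum T φ n x - n * c := by
  simp [birkhoffSum, Finset.sum_sub_distrib]

theorem birkhoffSum_iterate_of_isPeriodicPt {n : ℕ} {p : X} (hp : Function.IsPeriodicPt T n p)
    (k : ℕ) : birkhoffSum T φ n (T^[k] p) = birkhoffSum T φ n p := by
  induction k with
  | zero => rfl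
  | succ k ih =>
    rw [← ih, ← sub_eq_zero, Function.iterate_succ_apply', birkhoffSum_apply_sub_birkhoffSum,
      hp.apply_iterate k, sub_self]

theorem birkhoffSum_mul (T : X → X) (φ : X → ℝ) (m n : ℕ) (x : X) :
    birkhoffSum T φ (m * n) x = birkhoffSum T^[m] (birkhoffSum T φ m) n x := by
  induction n with
  | zero => simp
  | succ n ih => rw [Nat.mul_succ, birkhoffSum_add, ih, birkhoffSum_succ, Function.iterate_mul]

theorem birkhoffSum_le_birkhoffSum (hφ : ∀ x, 0 ≤ φ x) {m n : ℕ} (hmn : m ≤ n) (x : X) :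
    birkhoffSum T φ m x ≤ birkhoffSum T φ n x :=
  Finset.sum_le_sum_of_subset_of_nonneg (Finset.range_mono hmn) fun _ _ _ => hφ _

theorem continuous_birkhoffSum [TopologicalSpace X] (hT : Continuous T) (hφ : Continuous φ)
    (n : ℕ) : Continuous (birkhoffSum T φ n) :=
  continuous_finsetSum _ fun i _ => hφ.comp (hT.iterate i)

theorem exists_forall_apply_iterate_eq_zero [TopologicalSpace X] [CompactSpace X]
    (hT : Continuous T) (hφ : Continuous φ) (hφ0 : ∀ x, 0 ≤ φ x) {C : ℝ}
    (hC : ∀ n, ∃ x, birkhoffSum T φ n x ≤ C) : ∃ x, ∀ k, φ (T^[k] x) = 0 := by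
  have hcont := continuous_birkhoffSum hT hφ
  have hsmall (m : ℕ) {ε : ℝ} (hε : 0 < ε) : ∃ x, birkhoffSum T φ m x ≤ ε := by
    obtain ⟨N, hN⟩ := exists_nat_gt (C / ε)
    obtain ⟨x, hx⟩ := hC (m * (N + 1))
    have hsum : ∑ j ∈ Finset.range (N + 1), birkhoffSum T φ m ((T^[m])^[j] x) ≤
        ∑ _j ∈ Finset.range (N + 1), ε := by
      rw [birkhoffSum_mul] at hx
      rw [div_lt_iff₀ hε] at hN
      simp only [Finset.sum_const, Finset.card_range, nsmul_eq_mul, Nat.cast_add_one]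
      exact hx.trans (by linarith)
    obtain ⟨j, -, hj⟩ := Finset.exists_le_of_sum_le Finset.nonempty_range_add_one hsum
    exact ⟨_, hj⟩
  obtain ⟨x, hx⟩ := IsCompact.nonempty_iInter_of_sequence_nonempty_isCompact_isClosed
    (fun m => {x | birkhoffSum T φ m x ≤ 1 / ((m : ℝ) + 1)})
    (fun m x hx => (birkhoffSum_le_birkhoffSum hφ0 m.le_succ x).trans
      (le_trans hx (Nat.one_div_le_one_div m.le_succ)))
    (fun m => hsmall m Nat.one_div_pos_of_nat)
    (isClosed_le (hcont 0) continuous_const).isCompact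
    (fun m => isClosed_le (hcont m) continuous_const)
  have hzero (k : ℕ) : birkhoffSum T φ k x ≤ 0 :=
    ge_of_tendsto tendsto_one_div_add_atTop_nhds_zero_nat <|
      (eventually_ge_atTop k).mono fun m hm =>
        (birkhoffSum_le_birkhoffSum hφ0 hm x).trans (mem_iInter.1 hx m)
  refine ⟨x, fun k => (hφ0 _).antisymm' ?_⟩
  calc φ (T^[k] x) ≤ birkhoffSum T φ (k + 1) x :=
        Finset.single_le_sum (f := fun i => φ (T^[i] x)) (fun _ _ => hφ0 _)
          (Finset.self_mem_range_succ k)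
    _ ≤ 0 := hzero _

end Birkhoff

section ForwardOrbit

variable {X : Type*} {T : X → X} {a b p : X}

/-- The forward orbit of a point. -/
def forwardOrbit (T : X → X) (p : X) : Set X := range fun k => T^[k] p

theorem exists_pos_iterate_eq (hp : p ∈ Function.periodicPts T) (ha : a ∈ forwardOrbit T p)
    (hb : b ∈ forwardOrbit T p) : ∃ r > 0, T^[r] a = b := by
  obtain ⟨n, hn, hpn⟩ := hp
  obtain ⟨i, rfl⟩ := ha
  obtain ⟨j, rfl⟩ := hb
  refine ⟨j + (n * (i + 1) - i), ?_, ?_⟩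
  · have := Nat.le_mul_of_pos_left (i + 1) hn
    omega
  · have hi : i ≤ n * (i + 1) := i.le_succ.trans (Nat.le_mul_of_pos_left _ hn)
    simp only
    rw [← Function.iterate_add_apply, add_assoc, Nat.sub_add_cancel hi,
      Function.iterate_add_apply, hpn.mul_const (i + 1)]

theorem mapsTo_forwardOrbit (T : X → X) (p : X) :
    MapsTo T (forwardOrbit T p) (forwardOrbit T p) := by
  rintro _ ⟨k, rfl⟩
  exact ⟨k + 1, Function.iterate_succ_apply' T k p⟩

theorem finite_forwardOrbit (hp : p ∈ Function.periodicPts T) : (forwardOrbit T p).Finite := by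
  obtain ⟨n, hn, hpn⟩ := hp
  refine ((Finset.range n).finite_toSet.image fun k => T^[k] p).subset ?_
  rintro _ ⟨k, rfl⟩
  exact ⟨k % n, by simpa using Nat.mod_lt k hn, hpn.iterate_mod_apply k⟩

theorem exists_forall_dist_lt_imp_eq [MetricSpace X] {s : Set X} (hs : s.Finite) :
    ∃ δ > 0, ∀ a ∈ s, ∀ b ∈ s, dist a b < δ → a = b := by
  obtain hsub | hnon := s.subsingleton_or_nontrivial
  · exact ⟨1, one_pos, fun a ha b hb _ => hsub ha hb⟩
  · refine ⟨s.infsep, hs.infsep_pos_iff_nontrivial.2 hnon, fun a ha b hb hab => ?_⟩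
    by_contra hne
    exact hab.not_ge (infsep_le_dist_of_mem ha hb hne)

theorem exists_int_orbit_of_isPeriodicPt {n : ℕ} (hn : 0 < n) (hp : Function.IsPeriodicPt T n p) :
    ∃ y : ℤ → X, y 0 = p ∧ (∀ j, T (y j) = y (j + 1)) ∧ ∀ j, ∃ k < n, y j = T^[k] p := by
  have hn' : (n : ℤ) ≠ 0 := by omega
  have hcast (j : ℤ) : ((j % n).toNat : ℤ) = j % n := Int.toNat_of_nonneg (Int.emod_nonneg _ hn')
  refine ⟨fun j => T^[(j % n).toNat] p, by simp, fun j => ?_, fun j => ⟨_, ?_, rfl⟩⟩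
  · simp only
    rw [← Function.iterate_succ_apply' T, ← hp.iterate_mod_apply,
      ← hp.iterate_mod_apply ((j + 1) % n).toNat]
    congr 1
    zify
    rw [hcast, hcast]
    simp
  · zify
    rw [hcast]
    exact Int.emod_lt_of_pos _ (by omega)

end ForwardOrbit

/-! ### Non-wandering sets of normalized potentials -/

theorem exists_lt_mem_of_mapClusterPt {X : Type*} [TopologicalSpace X] {u : ℕ → X} {x : X}
    (hx : MapClusterPt x atTop u) {V : Set X} (hV : V ∈ 𝓝 x) :
    ∃ k l, k < l ∧ u k ∈ V ∧ u l ∈ V := by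
  have hfreq := frequently_atTop.1 (hx.frequently hV)
  obtain ⟨k, -, hk⟩ := hfreq 0
  obtain ⟨l, hkl, hl⟩ := hfreq (k + 1)
  exact ⟨k, l, hkl, hk, hl⟩

section SubAction

variable {X : Type*} {T : X → X} {φ g : X → ℝ}

/-- The coboundary excess `g ∘ T - g - φ`, nonnegative exactly when `g` is a sub-action. -/
def defect (T : X → X) (φ g : X → ℝ) (x : X) : ℝ := g (T x) - g x - φ x

theorem birkhoffSum_defect (T : X → X) (φ g : X → ℝ) (n : ℕ) (x : X) :
    birkhoffSum T (defect T φ g) n x = g (T^[n] x) - g x - birkhoffSum T φ n x := by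
  induction n with
  | zero => simp
  | succ n ih =>
    rw [birkhoffSum_succ, birkhoffSum_succ, ih, defect, Function.iterate_succ_apply']
    ring

theorem birkhoffSum_eq_of_defect_eq_zero {n : ℕ} {x : X}
    (hx : ∀ i < n, defect T φ g (T^[i] x) = 0) : birkhoffSum T φ n x = g (T^[n] x) - g x := by
  have hsum : birkhoffSum T (defect T φ g) n x = 0 :=
    Finset.sum_eq_zero fun i hi => hx i (Finset.mem_range.1 hi)
  rw [birkhoffSum_defect] at hsum
  linarith

theorem continuous_defect [TopologicalSpace X] (hT : Continuous T) (hφ : Continuous φ)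
    (hg : Continuous g) : Continuous (defect T φ g) :=
  ((hg.comp hT).sub hg).sub hφ

/-- The Mañé sub-action: the supremum of the Birkhoff sums over orbit segments ending at a
given point. -/
noncomputable def maneSubaction (T : X → X) (φ : X → ℝ) (x : X) : ℝ :=
  ⨆ s : {s : ℕ × X // T^[s.1] s.2 = x}, birkhoffSum T φ s.1.1 s.1.2

theorem maneSubaction_le {x : X} {C : ℝ} (hC : ∀ n z, T^[n] z = x → birkhoffSum T φ n z ≤ C) :
    maneSubaction T φ x ≤ C :=
  haveI : Nonempty {s : ℕ × X // T^[s.1] s.2 = x} := ⟨⟨(0, x), rfl⟩⟩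
  ciSup_le fun s => hC _ _ s.2

end SubAction

section Nonwandering

variable {X : Type*} [PseudoMetricSpace X] {A K : ℝ≥0} {T : X → X} {φ g : X → ℝ} {x : X}

/-- The linear shadowing properties of an expanding map, with total error controlled by `A`:
every orbit segment can be moved so as to end at a prescribed point, and every orbit segment
can be closed up to a periodic orbit. -/
structure ShadowingWith (A : ℝ≥0) (T : X → X) : Prop where
  continuous : Continuous T
  pullback (n : ℕ) (z x : X) : ∃ w, T^[n] w = x ∧
    ∑ i ∈ Finset.range n, dist (T^[i] w) (T^[i] z) ≤ A * dist x (T^[n] z)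
  closing (n : ℕ) (z : X) : ∃ q, Function.IsPeriodicPt T n q ∧
    ∑ i ∈ Finset.range n, dist (T^[i] q) (T^[i] z) ≤ A * dist (T^[n] z) z

/-- A Lipschitz potential `φ` over a shadowing map `T` whose maximal ergodic average is zero,
expressed through Birkhoff sums. The potential of a pair `(f, T)` is `f - β(f, T)`. -/
structure NormalizedPair (A K : ℝ≥0) (T : X → X) (φ : X → ℝ) : Prop
    extends ShadowingWith A T where
  lipschitz : LipschitzWith K φ
  periodic_nonpos (n : ℕ) (p : X) : Function.IsPeriodicPt T n p → birkhoffSum T φ n p ≤ 0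
  exists_nonneg (n : ℕ) : ∃ x, 0 ≤ birkhoffSum T φ n x

/-- The non-wandering set of a normalized potential: `Ω(f, T)` is the case
`φ = f - β(f, T)`. -/
def nonwanderingSet (T : X → X) (φ : X → ℝ) : Set X :=
  {x | ∀ ε > (0 : ℝ), ∃ n : ℕ, 1 ≤ n ∧ ∃ z, T^[n] z = x ∧ dist z x < ε ∧
    |birkhoffSum T φ n z| < ε}

namespace NormalizedPair

theorem abs_birkhoffSum_sub_le_mul (h : NormalizedPair A K T φ) {n : ℕ} {z w : X} {r : ℝ}
    (hr : ∑ i ∈ Finset.range n, dist (T^[i] w) (T^[i] z) ≤ A * r) :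
    |birkhoffSum T φ n w - birkhoffSum T φ n z| ≤ K * A * r :=
  (abs_birkhoffSum_sub_le h.lipschitz T n w z).trans
    ((mul_le_mul_of_nonneg_left hr K.2).trans_eq (mul_assoc _ _ _).symm)

theorem birkhoffSum_le_dist (h : NormalizedPair A K T φ) (n : ℕ) (x : X) :
    birkhoffSum T φ n x ≤ K * A * dist (T^[n] x) x := by
  obtain ⟨q, hq, hsum⟩ := h.closing n x
  have := (abs_le.1 (h.abs_birkhoffSum_sub_le_mul hsum)).1
  linarith [h.periodic_nonpos n q hq]

theorem birkhoffSum_le [CompactSpace X] (h : NormalizedPair A K T φ) (n : ℕ) (x : X) :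
    birkhoffSum T φ n x ≤ K * A * Metric.diam (univ : Set X) :=
  (h.birkhoffSum_le_dist n x).trans <| mul_le_mul_of_nonneg_left
    (Metric.dist_le_diam_of_mem isCompact_univ.isBounded (mem_univ _) (mem_univ _)) (by positivity)

theorem mem_nonwanderingSet_of_isPeriodicPt (h : NormalizedPair A K T φ)
    (hx : ∀ ε > 0, ∃ n > 0, ∃ p, Function.IsPeriodicPt T n p ∧ dist p x < ε ∧
      -ε < birkhoffSum T φ n p) : x ∈ nonwanderingSet T φ := by
  intro ε hε
  obtain ⟨δ, hδ, hδε⟩ := exists_pos_mul_lt hε ((A : ℝ) + K * A + 1)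
  obtain ⟨n, hn, p, hp, hpx, hS⟩ := hx δ hδ
  obtain ⟨w, hw, hsum⟩ := h.pullback n p x
  rw [hp, dist_comm] at hsum
  have hwp : dist w p ≤ A * dist p x :=
    (Finset.single_le_sum (f := fun i => dist (T^[i] w) (T^[i] p)) (fun _ _ => dist_nonneg)
      (Finset.mem_range.2 hn)).trans hsum
  have hSw := abs_le.1 (h.abs_birkhoffSum_sub_le_mul hsum)
  have hA : (A : ℝ) * dist p x ≤ A * δ := by gcongr
  have hKA : (K * A : ℝ) * dist p x ≤ K * A * δ := by gcongr
  have hAδ : 0 ≤ (A : ℝ) * δ := by positivity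
  have hKAδ : 0 ≤ (K * A : ℝ) * δ := by positivity
  refine ⟨n, hn, w, hw, ?_, abs_lt.2 ⟨?_, ?_⟩⟩
  · linarith [dist_triangle w p x, hKAδ]
  · linarith
  · linarith [h.periodic_nonpos n p hp]

theorem exists_isPeriodicPt_of_loop (h : NormalizedPair A K T φ)
    (hx : ∀ ε > 0, ∃ n, ∃ i < n, ∃ z, dist (T^[n] z) z < ε ∧ dist (T^[i] z) x < ε ∧
      -ε < birkhoffSum T φ n z) {ε : ℝ} (hε : 0 < ε) :
    ∃ n > 0, ∃ p, Function.IsPeriodicPt T n p ∧ dist p x < ε ∧ -ε < birkhoffSum T φ n p := by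
  obtain ⟨δ, hδ, hδε⟩ := exists_pos_mul_lt hε ((A : ℝ) + K * A + 1)
  obtain ⟨n, i, hi, z, hz, hzx, hS⟩ := hx δ hδ
  obtain ⟨q, hq, hsum⟩ := h.closing n z
  have hqz : dist (T^[i] q) (T^[i] z) ≤ A * dist (T^[n] z) z :=
    (Finset.single_le_sum (f := fun i => dist (T^[i] q) (T^[i] z)) (fun _ _ => dist_nonneg)
      (Finset.mem_range.2 hi)).trans hsum
  have hSq := abs_le.1 (h.abs_birkhoffSum_sub_le_mul hsum)
  have hA : (A : ℝ) * dist (T^[n] z) z ≤ A * δ := by gcongr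
  have hKA : (K * A : ℝ) * dist (T^[n] z) z ≤ K * A * δ := by gcongr
  have hAδ : 0 ≤ (A : ℝ) * δ := by positivity
  have hKAδ : 0 ≤ (K * A : ℝ) * δ := by positivity
  refine ⟨n, i.zero_le.trans_lt hi, T^[i] q, hq.apply_iterate i, ?_, ?_⟩
  · linarith [dist_triangle (T^[i] q) (T^[i] z) x, hKAδ]
  · rw [birkhoffSum_iterate_of_isPeriodicPt hq]
    linarith

theorem mem_nonwanderingSet_of_loop (h : NormalizedPair A K T φ)
    (hx : ∀ ε > 0, ∃ n, ∃ i < n, ∃ z, dist (T^[n] z) z < ε ∧ dist (T^[i] z) x < ε ∧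
      -ε < birkhoffSum T φ n z) : x ∈ nonwanderingSet T φ :=
  h.mem_nonwanderingSet_of_isPeriodicPt fun _ => h.exists_isPeriodicPt_of_loop hx

theorem exists_isPeriodicPt_of_mem_nonwanderingSet (h : NormalizedPair A K T φ)
    (hx : x ∈ nonwanderingSet T φ) {ε : ℝ} (hε : 0 < ε) :
    ∃ n > 0, ∃ p, Function.IsPeriodicPt T n p ∧ dist p x < ε ∧ -ε < birkhoffSum T φ n p := by
  refine h.exists_isPeriodicPt_of_loop (fun δ hδ => ?_) hε
  obtain ⟨n, hn, z, rfl, hz, hS⟩ := hx δ hδ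
  exact ⟨n, 0, hn, z, by rwa [dist_comm], hz, (abs_lt.1 hS).1⟩

theorem mapsTo_nonwanderingSet (h : NormalizedPair A K T φ) :
    MapsTo T (nonwanderingSet T φ) (nonwanderingSet T φ) := by
  refine fun x hx => h.mem_nonwanderingSet_of_isPeriodicPt fun ε hε => ?_
  obtain ⟨δ, hδ, hTδ⟩ := Metric.continuousAt_iff.1 h.continuous.continuousAt ε hε
  obtain ⟨n, hn, p, hp, hpx, hS⟩ :=
    h.exists_isPeriodicPt_of_mem_nonwanderingSet hx (lt_min hδ hε)
  refine ⟨n, hn, T p, hp.apply, hTδ (hpx.trans_le (min_le_left _ _)), ?_⟩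
  have hSp := birkhoffSum_iterate_of_isPeriodicPt (φ := φ) hp 1
  rw [Function.iterate_one] at hSp
  rw [hSp]
  exact (neg_le_neg (min_le_right _ _)).trans_lt hS

theorem mem_nonwanderingSet_of_calibrated_loop (h : NormalizedPair A K T φ) {b : X}
    (hg : ContinuousAt g b)
    (hx : ∀ V ∈ 𝓝 b, ∀ U ∈ 𝓝 x, ∃ n, ∃ i < n, ∃ z, z ∈ V ∧ T^[n] z ∈ V ∧ T^[i] z ∈ U ∧
      birkhoffSum T φ n z = g (T^[n] z) - g z) : x ∈ nonwanderingSet T φ := by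
  refine h.mem_nonwanderingSet_of_loop fun ε hε => ?_
  obtain ⟨n, i, hi, z, ⟨hzb, hgz⟩, ⟨hnb, hgn⟩, hzx, hS⟩ :=
    hx _ (inter_mem (Metric.ball_mem_nhds b (half_pos hε))
      (hg.preimage_mem_nhds (Metric.ball_mem_nhds (g b) (half_pos hε))))
      _ (Metric.ball_mem_nhds x hε)
  refine ⟨n, i, hi, z, ?_, hzx, ?_⟩
  · rw [Metric.mem_ball] at hzb hnb
    linarith [dist_triangle_right (T^[n] z) z b]
  · rw [mem_preimage, Metric.mem_ball, Real.dist_eq, abs_lt] at hgz hgn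
    linarith

theorem mem_nonwanderingSet_of_calibrated_return (h : NormalizedPair A K T φ)
    (hg : ContinuousAt g x) (hx : ∀ V ∈ 𝓝 x, ∃ n > 0, ∃ z ∈ V, T^[n] z ∈ V ∧
      birkhoffSum T φ n z = g (T^[n] z) - g z) : x ∈ nonwanderingSet T φ := by
  refine h.mem_nonwanderingSet_of_calibrated_loop hg fun V hV U hU => ?_
  obtain ⟨n, hn, z, ⟨hzV, hzU⟩, ⟨hnV, -⟩, hS⟩ := hx _ (inter_mem hV hU)
  exact ⟨n, 0, hn, z, hzV, hnV, hzU, hS⟩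

end NormalizedPair

namespace NormalizedPair

variable [CompactSpace X]

theorem birkhoffSum_le_maneSubaction (h : NormalizedPair A K T φ) (n : ℕ) (z : X) :
    birkhoffSum T φ n z ≤ maneSubaction T φ (T^[n] z) := by
  refine le_ciSup (f := fun s : {s : ℕ × X // T^[s.1] s.2 = T^[n] z} =>
    birkhoffSum T φ s.1.1 s.1.2) ?_ ⟨(n, z), rfl⟩
  refine ⟨K * A * Metric.diam (univ : Set X), ?_⟩
  rintro _ ⟨s, rfl⟩
  exact h.birkhoffSum_le _ _

theorem maneSubaction_mem_Icc (h : NormalizedPair A K T φ) (x : X) :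
    maneSubaction T φ x ∈ Icc 0 (K * A * Metric.diam (univ : Set X)) :=
  ⟨h.birkhoffSum_le_maneSubaction 0 x, maneSubaction_le fun n z _ => h.birkhoffSum_le n z⟩

theorem lipschitzWith_maneSubaction (h : NormalizedPair A K T φ) :
    LipschitzWith (K * A) (maneSubaction T φ) := by
  refine LipschitzWith.of_le_add_mul _ fun x y => maneSubaction_le ?_
  rintro n z rfl
  obtain ⟨w, rfl, hsum⟩ := h.pullback n z y
  have hS := (abs_le.1 (h.abs_birkhoffSum_sub_le_mul hsum)).1
  rw [dist_comm] at hS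
  push_cast
  linarith [h.birkhoffSum_le_maneSubaction n w]

theorem defect_maneSubaction_nonneg (h : NormalizedPair A K T φ) (x : X) :
    0 ≤ defect T φ (maneSubaction T φ) x := by
  suffices maneSubaction T φ x ≤ maneSubaction T φ (T x) - φ x by rw [defect]; linarith
  refine maneSubaction_le ?_
  rintro n z rfl
  have hS := h.birkhoffSum_le_maneSubaction (n + 1) z
  rw [birkhoffSum_succ, Function.iterate_succ_apply'] at hS
  linarith

theorem nonwanderingSet_nonempty (h : NormalizedPair A K T φ) :
    (nonwanderingSet T φ).Nonempty := by
  set g := maneSubaction T φ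
  have hg : Continuous g := h.lipschitzWith_maneSubaction.continuous
  have hsmall (n : ℕ) : ∃ x, birkhoffSum T (defect T φ g) n x ≤
      K * A * Metric.diam (univ : Set X) := by
    obtain ⟨x, hx⟩ := h.exists_nonneg n
    refine ⟨x, ?_⟩
    rw [birkhoffSum_defect]
    linarith [(h.maneSubaction_mem_Icc x).1, (h.maneSubaction_mem_Icc (T^[n] x)).2]
  obtain ⟨y, hy⟩ := exists_forall_apply_iterate_eq_zero h.continuous
    (continuous_defect h.continuous h.lipschitz.continuous hg) h.defect_maneSubaction_nonneg hsmall
  obtain ⟨b, hb⟩ : ∃ b, MapClusterPt b atTop fun k => T^[k] y := exists_clusterPt_of_compactSpace _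
  refine ⟨b, h.mem_nonwanderingSet_of_calibrated_return hg.continuousAt fun V hV => ?_⟩
  obtain ⟨k, l, hkl, hkV, hlV⟩ := exists_lt_mem_of_mapClusterPt hb hV
  have hl : T^[l - k] (T^[k] y) = T^[l] y := by
    rw [← Function.iterate_add_apply, Nat.sub_add_cancel hkl.le]
  refine ⟨l - k, Nat.sub_pos_of_lt hkl, T^[k] y, hkV, by rwa [hl],
    birkhoffSum_eq_of_defect_eq_zero fun i _ => ?_⟩
  rw [← Function.iterate_add_apply]
  exact hy _

end NormalizedPair

end Nonwandering

/-! ### Calibrated orbits and their limits -/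

section UniformLimits

variable {ι X Y Z : Type*} {l : Filter ι}

theorem tendstoUniformly_comp [UniformSpace Y] [UniformSpace Z] {F : ι → X → Y} {F₀ : X → Y}
    {G : ι → Y → Z} {G₀ : Y → Z} (hG : TendstoUniformly G G₀ l) (hG₀ : UniformContinuous G₀)
    (hF : TendstoUniformly F F₀ l) : TendstoUniformly (fun i => G i ∘ F i) (G₀ ∘ F₀) l := by
  intro u hu
  obtain ⟨v, hv, hvu⟩ := comp_mem_uniformity_sets hu
  filter_upwards [hG v hv, (hG₀.comp_tendstoUniformly hF) v hv] with i hGi hFi x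
  exact hvu ⟨_, hFi x, hGi (F i x)⟩

theorem tendstoUniformly_refl [UniformSpace Y] (F : X → Y) :
    TendstoUniformly (fun _ : ι => F) F l :=
  fun _ hu => Eventually.of_forall fun _ _ => refl_mem_uniformity hu

theorem tendstoUniformly_iterate [UniformSpace X] {T : ι → X → X} {T₀ : X → X}
    (hT : TendstoUniformly T T₀ l) (hT₀ : UniformContinuous T₀) (n : ℕ) :
    TendstoUniformly (fun i => (T i)^[n]) T₀^[n] l := by
  induction n with
  | zero => exact tendstoUniformly_refl id
  | succ n ih =>
    simp only [Function.iterate_succ']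
    exact tendstoUniformly_comp hT hT₀ ih

theorem tendstoUniformly_birkhoffSum [UniformSpace X] {T : ι → X → X} {T₀ : X → X}
    {φ : ι → X → ℝ} {φ₀ : X → ℝ} (hT : TendstoUniformly T T₀ l) (hT₀ : UniformContinuous T₀)
    (hφ : TendstoUniformly φ φ₀ l) (hφ₀ : UniformContinuous φ₀) (n : ℕ) :
    TendstoUniformly (fun i => birkhoffSum (T i) (φ i) n) (birkhoffSum T₀ φ₀ n) l := by
  induction n with
  | zero => exact tendstoUniformly_refl 0
  | succ n ih =>
    have hsucc (T : X → X) (φ : X → ℝ) :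
        birkhoffSum T φ (n + 1) = birkhoffSum T φ n + φ ∘ T^[n] := funext (birkhoffSum_succ T φ n)
    simp only [hsucc]
    exact ih.add (tendstoUniformly_comp hφ hφ₀ (tendstoUniformly_iterate hT hT₀ n))

theorem tendstoUniformly_defect [UniformSpace X] {T : ι → X → X} {T₀ : X → X}
    {φ g : ι → X → ℝ} {φ₀ g₀ : X → ℝ} (hT : TendstoUniformly T T₀ l)
    (hφ : TendstoUniformly φ φ₀ l) (hg : TendstoUniformly g g₀ l) (hg₀ : UniformContinuous g₀) :
    TendstoUniformly (fun i => defect (T i) (φ i) (g i)) (defect T₀ φ₀ g₀) l :=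
  ((tendstoUniformly_comp hg hg₀ hT).sub hg).sub hφ

theorem exists_tendstoUniformly_of_lipschitzWith [PseudoMetricSpace X] [CompactSpace X]
    (u : Ultrafilter ι) {L : ℝ≥0} {a b : ℝ} {g : ι → X → ℝ} (hg : ∀ i, LipschitzWith L (g i))
    (hab : ∀ i x, g i x ∈ Icc a b) :
    ∃ g₀, Continuous g₀ ∧ TendstoUniformly g g₀ u := by
  have hequi : Equicontinuous g := (LipschitzWith.uniformEquicontinuous g L hg).equicontinuous
  obtain ⟨g₀, -, hg₀⟩ := isCompact_iff_ultrafilter_le_nhds'.1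
    (isCompact_univ_pi fun _ : X => isCompact_Icc (a := a) (b := b)) (u.map g)
    (Ultrafilter.mem_map.2 (univ_mem' fun i x _ => hab i x))
  have hlim : Tendsto g u (𝓝 g₀) := hg₀
  exact ⟨g₀, hlim.continuous_of_equicontinuous hequi,
    UniformFun.tendsto_iff_tendstoUniformly.1 ((hequi.tendsto_uniformFun_iff_pi _ _).2 hlim)⟩

end UniformLimits

section CalibratedOrbit

variable {X : Type*} {T : X → X} {φ g : X → ℝ} {y : ℤ → X}

/-- A two-sided orbit of `T` along which the function `g` is calibrated, that is, along which
the sub-action inequality `g + φ ≤ g ∘ T` is an equality. -/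
structure IsCalibratedOrbit (T : X → X) (φ g : X → ℝ) (y : ℤ → X) : Prop where
  map_eq (j : ℤ) : T (y j) = y (j + 1)
  defect_eq_zero (j : ℤ) : defect T φ g (y j) = 0

namespace IsCalibratedOrbit

theorem iterate_eq (hy : IsCalibratedOrbit T φ g y) (n : ℕ) (j : ℤ) :
    T^[n] (y j) = y (j + n) := by
  induction n with
  | zero => simp
  | succ n ih => rw [Function.iterate_succ_apply', ih, hy.map_eq, Nat.cast_succ, add_assoc]

theorem birkhoffSum_eq (hy : IsCalibratedOrbit T φ g y) (n : ℕ) (j : ℤ) :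
    birkhoffSum T φ n (y j) = g (T^[n] (y j)) - g (y j) :=
  birkhoffSum_eq_of_defect_eq_zero fun i _ => by rw [hy.iterate_eq]; exact hy.defect_eq_zero _

end IsCalibratedOrbit

namespace NormalizedPair

variable [PseudoMetricSpace X] {A K : ℝ≥0} {b o : X}

theorem mem_nonwanderingSet_of_mapClusterPt (h : NormalizedPair A K T φ) (hg : ContinuousAt g b)
    (hy : IsCalibratedOrbit T φ g y) (hpos : MapClusterPt b atTop fun n : ℕ => y n)
    (hneg : MapClusterPt b atTop fun n : ℕ => y (-n)) : y 0 ∈ nonwanderingSet T φ := by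
  refine h.mem_nonwanderingSet_of_calibrated_loop hg fun V hV U hU => ?_
  obtain ⟨m, -, hm⟩ := frequently_atTop.1 (hneg.frequently hV) 0
  obtain ⟨n, hn, hnV⟩ := frequently_atTop.1 (hpos.frequently hV) 1
  have hiter : T^[m + n] (y (-m)) = y n := by simp [hy.iterate_eq]
  refine ⟨m + n, m, by omega, y (-m), hm, by rwa [hiter], ?_, hy.birkhoffSum_eq _ _⟩
  rw [hy.iterate_eq, neg_add_cancel]
  exact mem_of_mem_nhds hU

theorem mem_nonwanderingSet_of_isCalibratedOrbit [CompactSpace X] (h : NormalizedPair A K T φ)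
    (ho : o ∈ Function.periodicPts T) (hΩ : nonwanderingSet T φ = forwardOrbit T o)
    (hg : Continuous g) (hy : IsCalibratedOrbit T φ g y) : y 0 ∈ nonwanderingSet T φ := by
  obtain ⟨a, ha⟩ : ∃ a, MapClusterPt a atTop fun n : ℕ => y n := exists_clusterPt_of_compactSpace _
  obtain ⟨b, hb⟩ : ∃ b, MapClusterPt b atTop fun n : ℕ => y (-n) :=
    exists_clusterPt_of_compactSpace _
  have haΩ : a ∈ nonwanderingSet T φ := by
    refine h.mem_nonwanderingSet_of_calibrated_return hg.continuousAt fun V hV => ?_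
    obtain ⟨k, l, hkl, hkV, hlV⟩ := exists_lt_mem_of_mapClusterPt ha hV
    refine ⟨l - k, Nat.sub_pos_of_lt hkl, y k, hkV, ?_, hy.birkhoffSum_eq _ _⟩
    rwa [hy.iterate_eq, Nat.cast_sub hkl.le, add_sub_cancel]
  have hbΩ : b ∈ nonwanderingSet T φ := by
    refine h.mem_nonwanderingSet_of_calibrated_return hg.continuousAt fun V hV => ?_
    obtain ⟨k, l, hkl, hkV, hlV⟩ := exists_lt_mem_of_mapClusterPt hb hV
    refine ⟨l - k, Nat.sub_pos_of_lt hkl, y (-l), hlV, ?_, hy.birkhoffSum_eq _ _⟩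
    rwa [hy.iterate_eq, Nat.cast_sub hkl.le, neg_add_eq_sub, sub_sub_cancel_left]
  rw [hΩ] at haΩ hbΩ
  obtain ⟨r, -, rfl⟩ := exists_pos_iterate_eq ho haΩ hbΩ
  refine h.mem_nonwanderingSet_of_mapClusterPt hg.continuousAt hy ?_ hb
  have hshift : T^[r] ∘ (fun n : ℕ => y n) = (fun n : ℕ => y n) ∘ fun n => n + r :=
    funext fun n => by simp [hy.iterate_eq]
  have hra := ha.continuousAt_comp (h.continuous.iterate r).continuousAt
  rw [hshift] at hra
  exact hra.of_comp (tendsto_add_atTop_nat r)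

end NormalizedPair

section Limit

variable [MetricSpace X] [CompactSpace X] {A K : ℝ≥0}

theorem IsCalibratedOrbit.of_tendstoUniformly {ι : Type*} {l : Filter ι} [l.NeBot]
    {T : ι → X → X} {T₀ : X → X} {φ g : ι → X → ℝ} {φ₀ g₀ : X → ℝ} {y : ι → ℤ → X} {y₀ : ℤ → X}
    (hT : TendstoUniformly T T₀ l) (hT₀ : Continuous T₀)
    (hφ : TendstoUniformly φ φ₀ l) (hφ₀ : Continuous φ₀)
    (hg : TendstoUniformly g g₀ l) (hg₀ : Continuous g₀)
    (hy : ∀ j, Tendsto (fun i => y i j) l (𝓝 (y₀ j))) (hmap : ∀ i j, T i (y i j) = y i (j + 1))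
    (hdefect : ∀ j, Tendsto (fun i => defect (T i) (φ i) (g i) (y i j)) l (𝓝 0)) :
    IsCalibratedOrbit T₀ φ₀ g₀ y₀ where
  map_eq j := by
    have hTy := hT.tendsto_comp hT₀.continuousAt (hy j)
    simp only [hmap] at hTy
    exact tendsto_nhds_unique hTy (hy (j + 1))
  defect_eq_zero j := by
    have hlim := tendstoUniformly_defect hT hφ hg (CompactSpace.uniformContinuous_of_continuous hg₀)
    exact tendsto_nhds_unique
      (hlim.tendsto_comp (continuous_defect hT₀ hφ₀ hg₀).continuousAt (hy j)) (hdefect j)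

theorem exists_forall_tendsto_ultrafilter {ι : Type*} (u : Ultrafilter ι) (y : ι → ℤ → X) :
    ∃ y₀ : ℤ → X, ∀ j, Tendsto (fun i => y i j) u (𝓝 (y₀ j)) :=
  ⟨fun j => (u.map fun i => y i j).lim, fun j => (u.map fun i => y i j).le_nhds_lim⟩

theorem NormalizedPair.exists_isCalibratedOrbit (h : NormalizedPair A K T φ)
    (hg : Continuous g) (hsub : ∀ x, 0 ≤ defect T φ g x) {x : X} (hx : x ∈ nonwanderingSet T φ) :
    ∃ y, IsCalibratedOrbit T φ g y ∧ y 0 = x := by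
  choose n hn p hp hpx hS using fun i : ℕ =>
    h.exists_isPeriodicPt_of_mem_nonwanderingSet hx (Nat.one_div_pos_of_nat (α := ℝ) (n := i))
  choose y hy0 hymap hyp using fun i => exists_int_orbit_of_isPeriodicPt (hn i) (hp i)
  have hdefect (i : ℕ) (j : ℤ) : defect T φ g (y i j) ≤ 1 / ((i : ℝ) + 1) := by
    obtain ⟨k, hk, hyk⟩ := hyp i j
    calc defect T φ g (y i j) = defect T φ g (T^[k] (p i)) := by rw [hyk]
      _ ≤ birkhoffSum T (defect T φ g) (n i) (p i) :=
        Finset.single_le_sum (f := fun k => defect T φ g (T^[k] (p i))) (fun _ _ => hsub _)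
          (Finset.mem_range.2 hk)
      _ = -birkhoffSum T φ (n i) (p i) := by rw [birkhoffSum_defect, hp i, sub_self, zero_sub]
      _ ≤ 1 / ((i : ℝ) + 1) := by linarith [hS i]
  have hinv : Tendsto (fun i : ℕ => 1 / ((i : ℝ) + 1)) (hyperfilter ℕ) (𝓝 0) :=
    tendsto_one_div_add_atTop_nhds_zero_nat.mono_left Nat.hyperfilter_le_atTop
  obtain ⟨y₀, hy₀⟩ := exists_forall_tendsto_ultrafilter (hyperfilter ℕ) y
  refine ⟨y₀, .of_tendstoUniformly (tendstoUniformly_refl T) h.continuous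
    (tendstoUniformly_refl φ) h.lipschitz.continuous (tendstoUniformly_refl g) hg
    hy₀ hymap fun j => squeeze_zero (fun i => hsub _) (fun i => hdefect i j) hinv,
    tendsto_nhds_unique (hy₀ 0) ?_⟩
  simp only [hy0]
  exact tendsto_iff_dist_tendsto_zero.2
    (squeeze_zero (fun i => dist_nonneg) (fun i => (hpx i).le) hinv)

theorem exists_isCalibratedOrbit_of_tendsto {ι : Type*} (u : Ultrafilter ι) {T : ι → X → X}
    {T₀ : X → X} {φ : ι → X → ℝ} {φ₀ : X → ℝ} (h : ∀ i, NormalizedPair A K (T i) (φ i))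
    (hT : TendstoUniformly T T₀ u) (hφ : TendstoUniformly φ φ₀ u) {x : ι → X} {x₀ : X}
    (hx : ∀ i, x i ∈ nonwanderingSet (T i) (φ i)) (hx₀ : Tendsto x u (𝓝 x₀)) :
    ∃ g, Continuous g ∧ ∃ y, IsCalibratedOrbit T₀ φ₀ g y ∧ y 0 = x₀ := by
  have hT₀ : Continuous T₀ := hT.continuous (Frequently.of_forall fun i => (h i).continuous)
  have hφ₀ : Continuous φ₀ :=
    hφ.continuous (Frequently.of_forall fun i => (h i).lipschitz.continuous)
  obtain ⟨g₀, hg₀, hg⟩ := exists_tendstoUniformly_of_lipschitzWith u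
    (fun i => (h i).lipschitzWith_maneSubaction) fun i => (h i).maneSubaction_mem_Icc
  choose y hy hy0 using fun i => (h i).exists_isCalibratedOrbit
    (h i).lipschitzWith_maneSubaction.continuous (h i).defect_maneSubaction_nonneg (hx i)
  obtain ⟨y₀, hy₀⟩ := exists_forall_tendsto_ultrafilter u y
  refine ⟨g₀, hg₀, y₀, .of_tendstoUniformly hT hT₀ hφ hφ₀ hg hg₀ hy₀ (fun i => (hy i).map_eq)
    fun j => ?_, tendsto_nhds_unique (hy₀ 0) ?_⟩
  · simp only [(hy _).defect_eq_zero j, tendsto_const_nhds]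
  · simpa only [hy0] using hx₀

end Limit

end CalibratedOrbit

/-! ### Stability of a periodic non-wandering set -/

section Perturbation

variable {ι X : Type*} [MetricSpace X] {A K M : ℝ≥0} {l : Filter ι}
  {T : ι → X → X} {T₀ : X → X} {o : X} {η e : ℝ}

theorem eventually_nonwanderingSet_subset_thickening [CompactSpace X] {φ : ι → X → ℝ} {φ₀ : X → ℝ}
    (h : ∀ᶠ i in l, NormalizedPair A K (T i) (φ i)) (h₀ : NormalizedPair A K T₀ φ₀)
    (hT : TendstoUniformly T T₀ l) (hφ : TendstoUniformly φ φ₀ l)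
    (ho : o ∈ Function.periodicPts T₀) (hΩ : nonwanderingSet T₀ φ₀ = forwardOrbit T₀ o)
    (hη : 0 < η) :
    ∀ᶠ i in l, nonwanderingSet (T i) (φ i) ⊆ Metric.thickening η (forwardOrbit T₀ o) := by
  by_contra hcon
  let J := {i : ι // NormalizedPair A K (T i) (φ i) ∧
    ¬nonwanderingSet (T i) (φ i) ⊆ Metric.thickening η (forwardOrbit T₀ o)}
  have hJ : (comap (Subtype.val : J → ι) l).NeBot := comap_neBot_iff_frequently.2 <|
    ((not_eventually.1 hcon).and_eventually h).mono fun i hi => ⟨⟨i, hi.2, hi.1⟩, rfl⟩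
  choose x hx hxη using fun i : J => not_subset.1 i.2.2
  let u := Ultrafilter.of (comap (Subtype.val : J → ι) l)
  have hu : Tendsto Subtype.val (u : Filter J) l := tendsto_comap.mono_left (Ultrafilter.of_le _)
  have hx₀ : Tendsto x u (𝓝 (u.map x).lim) := (u.map x).le_nhds_lim
  obtain ⟨g, hg, y, hy, hy0⟩ := exists_isCalibratedOrbit_of_tendsto u (fun i : J => i.2.1)
    (fun v hv => hu.eventually (hT v hv)) (fun v hv => hu.eventually (hφ v hv)) hx hx₀
  have hmem := h₀.mem_nonwanderingSet_of_isCalibratedOrbit ho hΩ hg hy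
  rw [hy0, hΩ] at hmem
  obtain ⟨i, hi⟩ := (hx₀.eventually (Metric.ball_mem_nhds _ hη)).exists
  exact hxη i (Metric.mem_thickening_iff.2 ⟨_, hmem, hi⟩)

theorem NormalizedPair.mul_sub_le [CompactSpace X] {A' K' : ℝ≥0} {T T' : X → X} {f f' : X → ℝ}
    {b b' δ : ℝ} (h : NormalizedPair A K T fun x => f x - b)
    (h' : NormalizedPair A' K' T' fun x => f' x - b') {n : ℕ}
    (hff' : ∀ x, birkhoffSum T f n x ≤ birkhoffSum T' f' n x + δ) :
    n * (b - b') ≤ K' * A' * Metric.diam (univ : Set X) + δ := by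
  obtain ⟨x, hx⟩ := h.exists_nonneg n
  have hx' := h'.birkhoffSum_le n x
  rw [birkhoffSum_sub_const] at hx hx'
  linarith [hff' x]

theorem tendsto_normalizer [CompactSpace X] {f : ι → X → ℝ} {f₀ : X → ℝ} {b : ι → ℝ} {b₀ : ℝ}
    (h : ∀ᶠ i in l, NormalizedPair A K (T i) fun x => f i x - b i)
    (h₀ : NormalizedPair A K T₀ fun x => f₀ x - b₀)
    (hT : TendstoUniformly T T₀ l) (hf : TendstoUniformly f f₀ l) : Tendsto b l (𝓝 b₀) := by
  refine Metric.tendsto_nhds.2 fun ε hε => ?_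
  obtain ⟨n, hn⟩ := exists_nat_gt ((K * A * Metric.diam (univ : Set X) + 1) / ε)
  have hf₀ : UniformContinuous f₀ := by
    simpa using h₀.lipschitz.uniformContinuous.add (uniformContinuous_const (b := b₀))
  have hsum := tendstoUniformly_birkhoffSum hT
    (CompactSpace.uniformContinuous_of_continuous h₀.continuous) hf hf₀ n
  filter_upwards [h, Metric.tendstoUniformly_iff.1 hsum 1 one_pos] with i hi hclose
  have hn0 : (0 : ℝ) < n := lt_of_le_of_lt (by positivity) hn
  rw [div_lt_iff₀ hε] at hn
  have hclose' (x : X) := abs_lt.1 (hclose x)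
  have hupper := hi.mul_sub_le h₀ (n := n) (δ := 1) fun x => by linarith [(hclose' x).1]
  have hlower := h₀.mul_sub_le hi (n := n) (δ := 1) fun x => by linarith [(hclose' x).2]
  rw [Real.dist_eq, abs_lt]
  constructor <;> nlinarith

/-- Expansiveness of a map with constant `e`: distinct points are eventually `e`-separated. -/
def ExpansiveWith (e : ℝ) (T : X → X) : Prop :=
  ∀ x y, (∀ n, dist (T^[n] x) (T^[n] y) ≤ e) → x = y

theorem exists_shadow_of_subset_thickening {T : X → X} {Λ : Set X} {s : ℝ}
    (hT : LipschitzWith M T) (hclose : ∀ x, dist (T₀ x) (T x) < η) (hΛ : MapsTo T Λ Λ)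
    (hnear : Λ ⊆ Metric.thickening η (forwardOrbit T₀ o))
    (hs : ∀ a ∈ forwardOrbit T₀ o, ∀ b ∈ forwardOrbit T₀ o, dist a b < s → a = b)
    (hηs : (M + 2) * η < s) {x : X} (hx : x ∈ Λ) :
    ∃ q ∈ forwardOrbit T₀ o, ∀ n, dist (T^[n] x) (T₀^[n] q) < η := by
  obtain ⟨q, hq, hxq⟩ := Metric.mem_thickening_iff.1 (hnear hx)
  refine ⟨q, hq, fun n => ?_⟩
  induction n with
  | zero => exact hxq
  | succ n ih =>
    have hqn : T₀^[n] q ∈ forwardOrbit T₀ o := (mapsTo_forwardOrbit T₀ o).iterate n hq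
    rw [Function.iterate_succ_apply', Function.iterate_succ_apply']
    obtain ⟨q', hq', hxq'⟩ :=
      Metric.mem_thickening_iff.1 (hnear (hΛ (hΛ.iterate n hx)))
    have hTn : dist (T (T₀^[n] q)) (T (T^[n] x)) ≤ M * η := by
      rw [dist_comm]
      exact (hT.dist_le_mul _ _).trans (by gcongr)
    have hlt : dist (T₀ (T₀^[n] q)) q' < s := by
      calc dist (T₀ (T₀^[n] q)) q'
          ≤ dist (T₀ (T₀^[n] q)) (T (T₀^[n] q)) + dist (T (T₀^[n] q)) (T (T^[n] x)) +
            dist (T (T^[n] x)) q' := dist_triangle4 _ _ _ _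
        _ < s := by linarith [hclose (T₀^[n] q)]
    rwa [hs _ (mapsTo_forwardOrbit T₀ o hqn) _ hq' hlt]

theorem exists_eq_forwardOrbit_of_subset_thickening {T : X → X} {Λ : Set X} {s : ℝ}
    (hT : LipschitzWith M T) (hexp : ExpansiveWith e T) (hclose : ∀ x, dist (T₀ x) (T x) < η)
    (hΛ : MapsTo T Λ Λ) (hne : Λ.Nonempty) (ho : o ∈ Function.periodicPts T₀)
    (hnear : Λ ⊆ Metric.thickening η (forwardOrbit T₀ o))
    (hs : ∀ a ∈ forwardOrbit T₀ o, ∀ b ∈ forwardOrbit T₀ o, dist a b < s → a = b)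
    (hηs : (M + 2) * η < s) (hηe : 2 * η ≤ e) :
    ∃ x ∈ Function.periodicPts T, Λ = forwardOrbit T x := by
  have hconn {x x' : X} (hx : x ∈ Λ) (hx' : x' ∈ Λ) : ∃ r > 0, T^[r] x = x' := by
    obtain ⟨q, hq, hxq⟩ := exists_shadow_of_subset_thickening hT hclose hΛ hnear hs hηs hx
    obtain ⟨q', hq', hxq'⟩ := exists_shadow_of_subset_thickening hT hclose hΛ hnear hs hηs hx'
    obtain ⟨r, hr, rfl⟩ := exists_pos_iterate_eq ho hq hq'
    refine ⟨r, hr, hexp _ _ fun n => ?_⟩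
    have hxr := hxq (n + r)
    rw [Function.iterate_add_apply, Function.iterate_add_apply] at hxr
    linarith [dist_triangle_right (T^[n] (T^[r] x)) (T^[n] x') (T₀^[n] (T₀^[r] q)), hxq' n]
  obtain ⟨x, hx⟩ := hne
  obtain ⟨r, hr, hxr⟩ := hconn hx hx
  refine ⟨x, Function.mk_mem_periodicPts hr hxr, Subset.antisymm (fun x' hx' => ?_) ?_⟩
  · obtain ⟨k, -, hk⟩ := hconn hx hx'
    exact ⟨k, hk⟩
  · rintro _ ⟨k, rfl⟩
    exact hΛ.iterate k hx

theorem eventually_nonwanderingSet_eq_forwardOrbit [CompactSpace X] {f : ι → X → ℝ} {f₀ : X → ℝ}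
    {b : ι → ℝ} {b₀ : ℝ} (h : ∀ᶠ i in l, NormalizedPair A K (T i) fun x => f i x - b i)
    (h₀ : NormalizedPair A K T₀ fun x => f₀ x - b₀)
    (hT : TendstoUniformly T T₀ l) (hf : TendstoUniformly f f₀ l)
    (hlip : ∀ᶠ i in l, LipschitzWith M (T i)) (he : 0 < e) (hexp : ∀ᶠ i in l, ExpansiveWith e (T i))
    (ho : o ∈ Function.periodicPts T₀)
    (hΩ : nonwanderingSet T₀ (fun x => f₀ x - b₀) = forwardOrbit T₀ o) :
    ∀ᶠ i in l, ∃ x ∈ Function.periodicPts (T i),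
      nonwanderingSet (T i) (fun x => f i x - b i) = forwardOrbit (T i) x := by
  have hφ : TendstoUniformly (fun i x => f i x - b i) (fun x => f₀ x - b₀) l :=
    hf.sub (tendsto_normalizer h h₀ hT hf).tendstoUniformly_const
  obtain ⟨s, hs, hsep⟩ := exists_forall_dist_lt_imp_eq (finite_forwardOrbit ho)
  obtain ⟨η, hη, hηmin⟩ := exists_pos_mul_lt (lt_min hs he) (M + 2 : ℝ)
  have hηe : 2 * η ≤ e := by
    nlinarith [hηmin.trans_le (min_le_right s e), mul_nonneg M.coe_nonneg hη.le]
  filter_upwards [h, hlip, hexp, Metric.tendstoUniformly_iff.1 hT η hη,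
    eventually_nonwanderingSet_subset_thickening h h₀ hT hφ ho hΩ hη] with i hi hM he' hclose hnear
  exact exists_eq_forwardOrbit_of_subset_thickening hM he' hclose hi.mapsTo_nonwanderingSet
    hi.nonwanderingSet_nonempty ho hnear hsep (hηmin.trans_le (min_le_left s e)) hηe

end Perturbation

/-! ### Uniformly expanding maps -/

section UniformExpansion

variable {X : Type*} [PseudoMetricSpace X] {c l : ℝ} {A : ℝ≥0} {T : X → X}

/-- A map whose `n`-th iterate expands all distances by at least `c * l ^ n`. -/
structure UniformlyExpanding (c l : ℝ) (T : X → X) : Prop where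
  pos : 0 < c
  one_lt : 1 < l
  mul_dist_le (n : ℕ) (x y : X) : c * l ^ n * dist x y ≤ dist (T^[n] x) (T^[n] y)

namespace UniformlyExpanding

theorem inv_nonneg (h : UniformlyExpanding c l T) : 0 ≤ l⁻¹ :=
  inv_nonneg_of_nonneg (one_pos.trans h.one_lt).le

theorem inv_lt_one (h : UniformlyExpanding c l T) : l⁻¹ < 1 := inv_lt_one_of_one_lt₀ h.one_lt

theorem dist_le (h : UniformlyExpanding c l T) (n : ℕ) (x y : X) :
    dist x y ≤ c⁻¹ * l⁻¹ ^ n * dist (T^[n] x) (T^[n] y) := by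
  have hpos : 0 < c * l ^ n := mul_pos h.pos (pow_pos (one_pos.trans h.one_lt) n)
  rw [inv_pow, ← mul_inv, inv_mul_eq_div, le_div_iff₀ hpos, mul_comm]
  exact h.mul_dist_le n x y

theorem sum_dist_iterate_le (h : UniformlyExpanding c l T) (hA : c⁻¹ / (1 - l⁻¹) ≤ A)
    (n : ℕ) (x y : X) :
    ∑ i ∈ Finset.range n, dist (T^[i] x) (T^[i] y) ≤ A * dist (T^[n] x) (T^[n] y) := by
  have hterm : ∀ j ∈ Finset.range n, dist (T^[n - 1 - j] x) (T^[n - 1 - j] y) ≤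
      c⁻¹ * l⁻¹ ^ j * dist (T^[n] x) (T^[n] y) := by
    intro j hj
    have hjn : n = j + 1 + (n - 1 - j) := by have := Finset.mem_range.1 hj; omega
    refine (h.dist_le (j + 1) _ _).trans ?_
    rw [← Function.iterate_add_apply, ← Function.iterate_add_apply, ← hjn]
    have hc := inv_nonneg_of_nonneg h.pos.le
    gcongr ?_ * ?_ * _
    exact pow_le_pow_of_le_one h.inv_nonneg h.inv_lt_one.le j.le_succ
  have hgeom : ∑ j ∈ Finset.range n, l⁻¹ ^ j ≤ (1 - l⁻¹)⁻¹ :=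
    ((summable_geometric_of_lt_one h.inv_nonneg h.inv_lt_one).sum_le_tsum _
      fun _ _ => pow_nonneg h.inv_nonneg _).trans_eq
      (tsum_geometric_of_lt_one h.inv_nonneg h.inv_lt_one)
  calc ∑ i ∈ Finset.range n, dist (T^[i] x) (T^[i] y)
      = ∑ j ∈ Finset.range n, dist (T^[n - 1 - j] x) (T^[n - 1 - j] y) :=
        (Finset.sum_range_reflect _ n).symm
    _ ≤ ∑ j ∈ Finset.range n, c⁻¹ * l⁻¹ ^ j * dist (T^[n] x) (T^[n] y) :=
        Finset.sum_le_sum hterm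
    _ = c⁻¹ * (∑ j ∈ Finset.range n, l⁻¹ ^ j) * dist (T^[n] x) (T^[n] y) := by
        rw [Finset.mul_sum, Finset.sum_mul]
    _ ≤ A * dist (T^[n] x) (T^[n] y) := by
        have hc := inv_nonneg_of_nonneg h.pos.le
        rw [div_eq_mul_inv] at hA
        gcongr
        exact (mul_le_mul_of_nonneg_left hgeom hc).trans hA

theorem eq_of_forall_dist_iterate_le {Y : Type*} [MetricSpace Y] {T : Y → Y}
    (h : UniformlyExpanding c l T) {e : ℝ} {x y : Y}
    (hxy : ∀ n, dist (T^[n] x) (T^[n] y) ≤ e) : x = y := by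
  have hlim : Tendsto (fun n => c⁻¹ * l⁻¹ ^ n * e) atTop (𝓝 (c⁻¹ * 0 * e)) :=
    ((tendsto_pow_atTop_nhds_zero_of_lt_one h.inv_nonneg h.inv_lt_one).const_mul _).mul_const _
  rw [mul_zero, zero_mul] at hlim
  refine dist_le_zero.1 (ge_of_tendsto' hlim fun n => ?_)
  have hcl : 0 ≤ c⁻¹ * l⁻¹ ^ n :=
    mul_nonneg (inv_nonneg_of_nonneg h.pos.le) (pow_nonneg h.inv_nonneg n)
  exact (h.dist_le n x y).trans (mul_le_mul_of_nonneg_left (hxy n) hcl)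

theorem exists_isFixedPt {Y : Type*} [MetricSpace Y] [CompleteSpace Y] {T : Y → Y}
    (h : UniformlyExpanding c l T) (hT : Continuous T) (hsurj : Function.Surjective T) (t : Y) :
    ∃ q, Function.IsFixedPt T q ∧ dist q t ≤ c⁻¹ / (1 - l⁻¹) * dist t (T t) := by
  obtain ⟨ψ, hψ⟩ := hsurj.hasRightInverse
  have hback (j : ℕ) : dist (ψ^[j] t) (ψ^[j + 1] t) ≤ c⁻¹ * dist t (T t) * l⁻¹ ^ j := by
    have hj := h.dist_le (j + 1) (ψ^[j] t) (ψ^[j + 1] t)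
    rw [hψ.iterate (j + 1) t, Function.iterate_succ_apply' T, hψ.iterate j t, dist_comm (T t)] at hj
    calc _ ≤ c⁻¹ * l⁻¹ ^ (j + 1) * dist t (T t) := hj
      _ ≤ c⁻¹ * l⁻¹ ^ j * dist t (T t) := by
        have hc := inv_nonneg_of_nonneg h.pos.le
        gcongr ?_ * ?_ * _
        exact pow_le_pow_of_le_one h.inv_nonneg h.inv_lt_one.le j.le_succ
      _ = _ := by ring
  obtain ⟨q, hq⟩ := cauchySeq_tendsto_of_complete
    (cauchySeq_of_le_geometric _ _ h.inv_lt_one hback)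
  refine ⟨q, tendsto_nhds_unique ((hT.tendsto q).comp ((tendsto_add_atTop_iff_nat 1).2 hq)) ?_, ?_⟩
  · refine hq.congr fun j => ?_
    rw [Function.comp_apply, Function.iterate_succ_apply', hψ]
  · rw [dist_comm, div_mul_eq_mul_div]
    exact dist_le_of_le_geometric_of_tendsto₀ _ _ h.inv_lt_one hback hq

end UniformlyExpanding

end UniformExpansion

theorem surjective_of_continuous_of_mul_dist_le {F : ℝ → ℝ} {k : ℝ} (hF : Continuous F)
    (hk : 0 < k) (h : ∀ x y, k * dist x y ≤ dist (F x) (F y)) : Function.Surjective F := by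
  have hinj : Function.Injective F := fun x y hxy => by
    have hle := h x y
    rw [hxy, dist_self] at hle
    exact dist_le_zero.1 (nonpos_of_mul_nonpos_right hle hk)
  wlog hmono : StrictMono F generalizing F
  · have hanti := (hF.strictMono_of_inj hinj).resolve_left hmono
    have hneg := this (F := fun x => -F x) hF.neg
      (fun x y => by simpa only [dist_neg_neg] using h x y) (neg_injective.comp hinj) hanti.neg
    exact fun y => (hneg (-y)).imp fun _ hx => neg_injective hx
  have hgap {x y : ℝ} (hxy : x ≤ y) : k * (y - x) ≤ F y - F x := by
    have := h y x
    rwa [Real.dist_eq, Real.dist_eq, abs_of_nonneg (sub_nonneg.2 hxy),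
      abs_of_nonneg (sub_nonneg.2 (hmono.monotone hxy))] at this
  refine hF.surjective ?_ ?_
  · refine tendsto_atTop_mono' _ ?_
      (tendsto_atTop_add_const_left _ (F 0) (tendsto_id.const_mul_atTop hk))
    filter_upwards [eventually_ge_atTop 0] with x hx
    have := hgap hx
    simp only [id_eq]
    linarith
  · refine tendsto_atBot_mono' _ ?_
      (tendsto_atBot_add_const_left _ (F 0) (tendsto_id.const_mul_atBot hk))
    filter_upwards [eventually_le_atBot 0] with x hx
    have := hgap hx
    simp only [id_eq]
    linarith

theorem UniformlyExpanding.surjective {F : ℝ → ℝ} {c l : ℝ} (h : UniformlyExpanding c l F)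
    (hF : Continuous F) : Function.Surjective F :=
  surjective_of_continuous_of_mul_dist_le hF (mul_pos h.pos (pow_pos (one_pos.trans h.one_lt) 1))
    (h.mul_dist_le 1)

/-! ### Circle maps and their lifts -/

section Circle

theorem coe_rep (z : Circle1) : (rep z : Circle1) = z := AddCircle.coe_equivIco

theorem exists_eq_add_int_of_coe_eq {x y : ℝ} (h : (x : Circle1) = y) : ∃ k : ℤ, x = y + k := by
  rw [← sub_eq_zero, ← AddCircle.coe_sub, AddCircle.coe_eq_zero_iff] at h
  obtain ⟨k, hk⟩ := h
  exact ⟨k, by rw [← sub_eq_iff_eq_add', ← hk, zsmul_one]⟩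

theorem coe_add_int (x : ℝ) (k : ℤ) : ((x + k : ℝ) : Circle1) = x := by
  have hk : ((k : ℝ) : Circle1) = 0 := (AddCircle.coe_eq_zero_iff 1).2 ⟨k, zsmul_one k⟩
  rw [AddCircle.coe_add, hk, add_zero]

theorem dist_coe_le (x y : ℝ) : dist (x : Circle1) y ≤ dist x y := by
  rw [dist_eq_norm, ← AddCircle.coe_sub, UnitAddCircle.norm_eq, Real.dist_eq]
  simpa only [Int.cast_zero, sub_zero] using round_le (x - y) 0

theorem dist_coe_of_le_half {x y : ℝ} (h : dist x y ≤ 1 / 2) :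
    dist (x : Circle1) y = dist x y := by
  rw [dist_eq_norm, ← AddCircle.coe_sub, Real.dist_eq,
    AddCircle.norm_coe_eq_abs_iff 1 one_ne_zero, abs_one]
  exact h

theorem exists_coe_eq_dist_eq (x : ℝ) (y : Circle1) :
    ∃ t : ℝ, (t : Circle1) = y ∧ dist x t = dist (x : Circle1) y := by
  refine ⟨rep y + round (x - rep y), by rw [coe_add_int, coe_rep], ?_⟩
  conv_rhs => rw [← coe_rep y, dist_eq_norm, ← AddCircle.coe_sub, UnitAddCircle.norm_eq]
  rw [Real.dist_eq, sub_add_eq_sub_sub]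

theorem lipschitzWith_of_comp_coe {Y : Type*} [PseudoMetricSpace Y] {f : Circle1 → Y} {K : ℝ≥0}
    (h : LipschitzWith K fun x : ℝ => f x) : LipschitzWith K f :=
  LipschitzWith.of_dist_le_mul fun z w => by
    obtain ⟨t, rfl, ht⟩ := exists_coe_eq_dist_eq (rep z) w
    rw [coe_rep] at ht
    rw [← ht]
    simpa only [coe_rep] using h.dist_le_mul (rep z) t

end Circle

section Lift

variable {F : ℝ → ℝ} {c l : ℝ} {d : ℤ} {A M : ℝ≥0}

theorem map_add_int_of_map_add_one (hd : ∀ x, F (x + 1) = F x + d) (x : ℝ) (k : ℤ) :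
    F (x + k) = F x + (d * k : ℤ) := by
  have h := AddConstMapClass.map_add_int' (⟨F, hd⟩ : AddConstMap ℝ ℝ 1 d) x k
  simpa only [AddConstMap.coe_mk, zsmul_eq_mul, mul_comm (k : ℝ), ← Int.cast_mul] using h

theorem iterate_add_one_of_map_add_one (hd : ∀ x, F (x + 1) = F x + d) (n : ℕ) (x : ℝ) :
    F^[n] (x + 1) = F^[n] x + (d ^ n : ℤ) := by
  induction n with
  | zero => simp
  | succ n ih =>
    rw [Function.iterate_succ_apply', ih, map_add_int_of_map_add_one hd,
      Function.iterate_succ_apply', pow_succ']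

theorem semiconj_cmap (hd : ∀ x, F (x + 1) = F x + d) :
    Function.Semiconj ((↑) : ℝ → Circle1) F (cmap F) := fun x => by
  obtain ⟨k, hk⟩ := exists_eq_add_int_of_coe_eq (coe_rep (x : Circle1))
  rw [cmap, hk, map_add_int_of_map_add_one hd, coe_add_int]

theorem lipschitzWith_cmap (hd : ∀ x, F (x + 1) = F x + d) (hF : LipschitzWith M F) :
    LipschitzWith M (cmap F) :=
  lipschitzWith_of_comp_coe <| LipschitzWith.of_dist_le_mul fun x y => by
    rw [← semiconj_cmap hd x, ← semiconj_cmap hd y]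
    exact (dist_coe_le _ _).trans (hF.dist_le_mul x y)

theorem expansiveWith_cmap (hd : ∀ x, F (x + 1) = F x + d) (hF : LipschitzWith M F)
    (hexp : UniformlyExpanding c l F) {e : ℝ} (hMe : M * e ≤ 1 / 2) :
    ExpansiveWith e (cmap F) := fun z w hzw => by
  obtain ⟨s, rfl⟩ : ∃ s : ℝ, (s : Circle1) = z := ⟨rep z, coe_rep z⟩
  obtain ⟨t, rfl, ht⟩ := exists_coe_eq_dist_eq s w
  refine congrArg _ (hexp.eq_of_forall_dist_iterate_le (e := e) fun n => ?_)
  induction n with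
  | zero => exact ht.trans_le (hzw 0)
  | succ n ih =>
    have hsmall : dist (F^[n + 1] s) (F^[n + 1] t) ≤ 1 / 2 := by
      rw [Function.iterate_succ_apply', Function.iterate_succ_apply']
      exact ((hF.dist_le_mul _ _).trans (mul_le_mul_of_nonneg_left ih M.2)).trans hMe
    have hsc := ((semiconj_cmap hd).iterate_right (n + 1))
    rw [← dist_coe_of_le_half hsmall, hsc s, hsc t]
    exact hzw (n + 1)

theorem uniformlyExpanding_iterate_sub (hd : ∀ x, F (x + 1) = F x + d)
    (h : UniformlyExpanding c l F) {n : ℕ} (hn : 0 < n) (k : ℤ) :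
    UniformlyExpanding c l fun x => F^[n] x - k where
  pos := h.pos
  one_lt := h.one_lt
  mul_dist_le j x y := by
    have hiter : ∃ e : ℤ, ∀ x, (fun x => F^[n] x - k)^[j] x = F^[n * j] x + e := by
      induction j with
      | zero => exact ⟨0, by simp⟩
      | succ j ih =>
        obtain ⟨e, he⟩ := ih
        refine ⟨d ^ n * e - k, fun x => ?_⟩
        rw [Function.iterate_succ_apply', he,
          map_add_int_of_map_add_one (iterate_add_one_of_map_add_one hd n),
          ← Function.iterate_add_apply, Nat.mul_succ, add_comm n]
        push_cast
        ring
    obtain ⟨e, he⟩ := hiter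
    rw [he, he, dist_add_right]
    refine le_trans ?_ (h.mul_dist_le (n * j) x y)
    have := h.pos
    gcongr
    · exact h.one_lt.le
    · exact Nat.le_mul_of_pos_left j hn

theorem exists_isPeriodicPt_cmap (hF : Continuous F) (hd : ∀ x, F (x + 1) = F x + d)
    (h : UniformlyExpanding c l F) (hA : c⁻¹ / (1 - l⁻¹) ≤ A) (n : ℕ) (z : Circle1) :
    ∃ q, Function.IsPeriodicPt (cmap F) n q ∧
      ∑ i ∈ Finset.range n, dist ((cmap F)^[i] q) ((cmap F)^[i] z) ≤
        A * (A + 1) * dist ((cmap F)^[n] z) z := by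
  obtain rfl | hn := n.eq_zero_or_pos
  · exact ⟨z, rfl, by simp⟩
  have hsc := (semiconj_cmap hd).iterate_right
  obtain ⟨t, rfl⟩ : ∃ t : ℝ, (t : Circle1) = z := ⟨rep z, coe_rep z⟩
  obtain ⟨s, hs, hts⟩ := exists_coe_eq_dist_eq t (F^[n] t : ℝ)
  obtain ⟨k, hk⟩ := exists_eq_add_int_of_coe_eq hs.symm
  have hP := uniformlyExpanding_iterate_sub hd h hn k
  have hPcont : Continuous fun x => F^[n] x - k := (hF.iterate n).sub continuous_const
  obtain ⟨q, hq, hqt⟩ := hP.exists_isFixedPt hPcont (hP.surjective hPcont) t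
  rw [hk, add_sub_cancel_right, hts] at hqt
  have hFq : F^[n] q = q + k := sub_eq_iff_eq_add.1 hq
  refine ⟨q, ?_, ?_⟩
  · rw [Function.IsPeriodicPt, Function.IsFixedPt, ← hsc, hFq, coe_add_int]
  calc ∑ i ∈ Finset.range n, dist ((cmap F)^[i] q) ((cmap F)^[i] t)
      ≤ ∑ i ∈ Finset.range n, dist (F^[i] q) (F^[i] t) :=
        Finset.sum_le_sum fun i _ => by
          rw [← hsc, ← hsc]
          exact dist_coe_le _ _
    _ ≤ A * dist (F^[n] q) (F^[n] t) := h.sum_dist_iterate_le hA n q t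
    _ = A * dist q s := by rw [hFq, hk, dist_add_right]
    _ ≤ A * (A * dist (t : Circle1) (F^[n] t : ℝ) + dist (t : Circle1) (F^[n] t : ℝ)) := by
        gcongr
        refine (dist_triangle q t s).trans (add_le_add (hqt.trans ?_) hts.le)
        gcongr
    _ = A * (A + 1) * dist ((cmap F)^[n] t) t := by
        rw [← hsc, dist_comm]
        ring

theorem exists_iterate_cmap_eq (hF : Continuous F) (hd : ∀ x, F (x + 1) = F x + d)
    (h : UniformlyExpanding c l F) (hA : c⁻¹ / (1 - l⁻¹) ≤ A) (n : ℕ) (z x : Circle1) :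
    ∃ w, (cmap F)^[n] w = x ∧
      ∑ i ∈ Finset.range n, dist ((cmap F)^[i] w) ((cmap F)^[i] z) ≤
        A * dist x ((cmap F)^[n] z) := by
  have hsc := (semiconj_cmap hd).iterate_right
  obtain ⟨t, rfl⟩ : ∃ t : ℝ, (t : Circle1) = z := ⟨rep z, coe_rep z⟩
  obtain ⟨s, rfl, hs⟩ := exists_coe_eq_dist_eq (F^[n] t) x
  obtain ⟨w, rfl⟩ := (h.surjective hF).iterate n s
  refine ⟨w, (hsc n w).symm, ?_⟩
  rw [← hsc, dist_comm, ← hs, dist_comm]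
  refine le_trans (Finset.sum_le_sum fun i _ => ?_) (h.sum_dist_iterate_le hA n w t)
  rw [← hsc, ← hsc]
  exact dist_coe_le _ _

theorem shadowingWith_cmap (hF : LipschitzWith M F) (hd : ∀ x, F (x + 1) = F x + d)
    (h : UniformlyExpanding c l F) (hA : c⁻¹ / (1 - l⁻¹) ≤ A) :
    ShadowingWith (A * (A + 1)) (cmap F) where
  continuous := (lipschitzWith_cmap hd hF).continuous
  pullback n z x := by
    obtain ⟨w, hw, hsum⟩ := exists_iterate_cmap_eq hF.continuous hd h hA n z x
    refine ⟨w, hw, hsum.trans (mul_le_mul_of_nonneg_right ?_ dist_nonneg)⟩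
    exact NNReal.coe_le_coe.2 (le_mul_of_one_le_right' (le_add_of_nonneg_left A.2))
  closing n z := by
    push_cast
    exact exists_isPeriodicPt_cmap hF.continuous hd h hA n z

end Lift

/-! ### The maximal ergodic average -/

section InvariantMeasure

theorem exists_isProbabilityMeasure_of_isPeriodicPt {X : Type*} [MeasurableSpace X]
    [MeasurableSingletonClass X] {T : X → X} (hT : Measurable T) {n : ℕ} (hn : 0 < n) {p : X}
    (hp : Function.IsPeriodicPt T n p) :
    ∃ μ : Measure X, IsProbabilityMeasure μ ∧ μ.map T = μ ∧
      ∀ f : X → ℝ, n * ∫ x, f x ∂μ = birkhoffSum T f n p := by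
  have hn0 : (n : ENNReal) ≠ 0 := by exact_mod_cast hn.ne'
  refine ⟨(n : ENNReal)⁻¹ • ∑ i ∈ Finset.range n, Measure.dirac (T^[i] p), ⟨?_⟩, ?_, fun f => ?_⟩
  · simp [ENNReal.inv_mul_cancel hn0]
  · rw [Measure.map_smul, ← Measure.mapₗ_apply_of_measurable hT, map_sum]
    simp only [Measure.mapₗ_apply_of_measurable hT, Measure.map_dirac' hT,
      ← Function.iterate_succ_apply' T]
    obtain ⟨m, rfl⟩ := Nat.exists_eq_succ_of_ne_zero hn.ne'
    rw [Finset.sum_range_succ, Finset.sum_range_succ' (fun i => Measure.dirac (T^[i] p)), hp]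
    rfl
  · rw [integral_smul_measure,
      integral_finsetSum_measure fun i _ => integrable_dirac (by simp)]
    have hn' : (n : ℝ) ≠ 0 := by exact_mod_cast hn.ne'
    simp [birkhoffSum, hn']

theorem integral_birkhoffSum {X : Type*} [MeasurableSpace X] {μ : Measure X} {T : X → X}
    (hT : MeasurePreserving T μ μ) {f : X → ℝ} (hf : Integrable f μ) (n : ℕ) :
    ∫ x, birkhoffSum T f n x ∂μ = n * ∫ x, f x ∂μ := by
  have hterm (i : ℕ) : ∫ x, f (T^[i] x) ∂μ = ∫ x, f x ∂μ := by
    have hTi := hT.iterate i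
    have hmap := integral_map (f := f) hTi.measurable.aemeasurable
      (hTi.map_eq.symm ▸ hf.aestronglyMeasurable)
    rw [← hmap, hTi.map_eq]
  simp only [birkhoffSum]
  rw [integral_finsetSum (f := fun i x => f (T^[i] x)) _
    fun i _ => (hT.iterate i).integrable_comp_of_integrable hf]
  simp only [hterm, Finset.sum_const, Finset.card_range, nsmul_eq_mul]

end InvariantMeasure

section Beta

variable {T : Circle1 → Circle1} {f : Circle1 → ℝ}

theorem InvProb.integrable_of_continuous {μ : Measure Circle1} (hμ : InvProb T μ)
    (hf : Continuous f) : Integrable f μ :=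
  haveI := hμ.1
  hf.integrable_of_hasCompactSupport (HasCompactSupport.of_compactSpace f)

theorem integral_le_beta (hf : Continuous f) {μ : Measure Circle1} (hμ : InvProb T μ) :
    ∫ x, f x ∂μ ≤ beta f T := by
  obtain ⟨C, hC⟩ := (isCompact_range hf).bddAbove
  refine le_csSup ⟨C, ?_⟩ ⟨μ, hμ, rfl⟩
  rintro _ ⟨ν, hν, rfl⟩
  have := hν.1
  calc ∫ x, f x ∂ν ≤ ∫ _, C ∂ν :=
        integral_mono (hν.integrable_of_continuous hf) (integrable_const C)
          fun x => hC (mem_range_self x)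
    _ = C := by simp

theorem birkhoffSum_sub_beta_nonpos (hT : Continuous T) (hf : Continuous f) {n : ℕ}
    {p : Circle1} (hp : Function.IsPeriodicPt T n p) :
    birkhoffSum T (fun x => f x - beta f T) n p ≤ 0 := by
  obtain rfl | hn := n.eq_zero_or_pos
  · rfl
  obtain ⟨μ, hμ, hinv, hint⟩ := exists_isProbabilityMeasure_of_isPeriodicPt hT.measurable hn hp
  rw [birkhoffSum_sub_const, ← hint, ← mul_sub]
  exact mul_nonpos_of_nonneg_of_nonpos n.cast_nonneg
    (sub_nonpos.2 (integral_le_beta hf ⟨hμ, hinv⟩))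

theorem exists_birkhoffSum_sub_beta_nonneg (hT : Continuous T) (hf : Continuous f)
    (hμ : ∃ μ, InvProb T μ) (n : ℕ) :
    ∃ x, 0 ≤ birkhoffSum T (fun x => f x - beta f T) n x := by
  obtain ⟨x, -, hx⟩ := isCompact_univ.exists_isMaxOn univ_nonempty
    (continuous_birkhoffSum hT hf n).continuousOn
  refine ⟨x, ?_⟩
  obtain rfl | hn := n.eq_zero_or_pos
  · rfl
  rw [birkhoffSum_sub_const, sub_nonneg, mul_comm, ← le_div_iff₀ (Nat.cast_pos.2 hn)]
  obtain ⟨μ₀, hμ₀⟩ := hμ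
  refine csSup_le ⟨_, μ₀, hμ₀, rfl⟩ ?_
  rintro _ ⟨μ, hμ, rfl⟩
  have := hμ.1
  have hfμ := hμ.integrable_of_continuous hf
  rw [le_div_iff₀ (Nat.cast_pos.2 hn), mul_comm,
    ← integral_birkhoffSum ⟨hT.measurable, hμ.2⟩ hfμ]
  calc ∫ y, birkhoffSum T f n y ∂μ ≤ ∫ _, birkhoffSum T f n x ∂μ :=
        integral_mono (hμ.integrable_of_continuous (continuous_birkhoffSum hT hf n))
          (integrable_const _) fun y => hx (mem_univ y)
    _ = birkhoffSum T f n x := by simp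

theorem ShadowingWith.normalizedPair {A K : ℝ≥0} (h : ShadowingWith A T)
    (hf : LipschitzWith K f) : NormalizedPair A K T fun x => f x - beta f T where
  toShadowingWith := h
  lipschitz := by simpa using hf.sub (LipschitzWith.const (beta f T))
  periodic_nonpos n p hp := birkhoffSum_sub_beta_nonpos h.continuous hf.continuous hp
  exists_nonneg n := by
    obtain ⟨p, hp, -⟩ := h.closing 1 0
    obtain ⟨μ, hμ, hinv, -⟩ :=
      exists_isProbabilityMeasure_of_isPeriodicPt h.continuous.measurable one_pos hp
    exact exists_birkhoffSum_sub_beta_nonneg h.continuous hf.continuous ⟨μ, hμ, hinv⟩ n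

end Beta

/-! ### Lifts of class `C^1` -/

section Periodic

variable {f : ℝ → ℝ} {p : ℝ}

theorem exists_abs_le_of_periodic (hf : Continuous f) (hper : Function.Periodic f p)
    (hp : p ≠ 0) : ∃ K : ℝ≥0, ∀ x, |f x| ≤ K := by
  obtain ⟨K, hK⟩ := (hper.compact_of_continuous hp hf).isBounded.exists_norm_le
  have hle (x : ℝ) : |f x| ≤ K := hK _ (mem_range_self x)
  exact ⟨⟨K, (abs_nonneg _).trans (hle 0)⟩, hle⟩

theorem uniformContinuous_of_periodic [Fact (0 < p)] (hf : Continuous f)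
    (hper : Function.Periodic f p) : UniformContinuous f := by
  have hlift : Continuous (hper.lift : AddCircle p → ℝ) := continuous_coinduced_dom.2 hf
  have hcoe : UniformContinuous ((↑) : ℝ → AddCircle p) :=
    uniformContinuous_addMonoidHom_of_continuous (f := QuotientAddGroup.mk' _)
      (AddCircle.continuous_mk' p)
  exact (CompactSpace.uniformContinuous_of_continuous hlift).comp hcoe

theorem periodic_deriv_of_map_add {d : ℝ} (h : ∀ x, f (x + p) = f x + d) :
    Function.Periodic (deriv f) p := fun x => by
  rw [← deriv_comp_add_const f p x, funext h, deriv_add_const]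

end Periodic

section DerivativeBounds

variable {f F : ℝ → ℝ} {k : ℝ}

theorem lipschitzWith_of_abs_deriv_le (hf : Differentiable ℝ f) {K : ℝ≥0}
    (h : ∀ x, |deriv f x| ≤ K) : LipschitzWith K f :=
  lipschitzWith_of_nnnorm_deriv_le hf fun x => NNReal.coe_le_coe.1 (h x)

theorem mul_dist_le_of_le_abs_deriv (hF : Differentiable ℝ F) (h : ∀ x, k ≤ |deriv F x|)
    (x y : ℝ) : k * dist x y ≤ dist (F x) (F y) := by
  wlog hxy : x < y generalizing x y
  · obtain rfl | hlt := eq_or_lt_of_le (not_lt.1 hxy)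
    · simp
    · rw [dist_comm, dist_comm (F x)]
      exact this y x hlt
  obtain ⟨z, -, hz⟩ := exists_deriv_eq_slope F hxy hF.continuous.continuousOn hF.differentiableOn
  have hpos : 0 < |y - x| := abs_pos.2 (sub_pos.2 hxy).ne'
  rw [dist_comm, dist_comm (F x), Real.dist_eq, Real.dist_eq, ← le_div_iff₀ hpos, ← abs_div, ← hz]
  exact h z

theorem deriv_iterate_succ (hF : Differentiable ℝ F) (n : ℕ) (x : ℝ) :
    deriv F^[n + 1] x = deriv F (F^[n] x) * deriv F^[n] x := by
  rw [Function.iterate_succ', deriv_comp x (hF _) (hF.iterate n x)]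

theorem deriv_iterate_ne_zero (hF : Differentiable ℝ F) (h : ∀ x, deriv F x ≠ 0) (n : ℕ)
    (x : ℝ) : deriv F^[n] x ≠ 0 := by
  induction n with
  | zero => simp
  | succ n ih => exact deriv_iterate_succ hF n x ▸ mul_ne_zero (h _) ih

theorem log_deriv_iterate (hF : Differentiable ℝ F) (h : ∀ x, deriv F x ≠ 0) (n : ℕ) (x : ℝ) :
    Real.log (deriv F^[n] x) = birkhoffSum F (fun x => Real.log (deriv F x)) n x := by
  induction n with
  | zero => simp
  | succ n ih =>
    rw [deriv_iterate_succ hF, Real.log_mul (h _) (deriv_iterate_ne_zero hF h n x), ih,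
      birkhoffSum_succ, add_comm]

end DerivativeBounds

section LogDerivative

theorem neg_mul_le_birkhoffSum {X : Type*} {T : X → X} {φ : X → ℝ} {N : ℕ} (hN : 0 < N) {b : ℝ}
    (hb : 0 ≤ b) (hφ : ∀ x, -b ≤ φ x) (hsum : ∀ x, 0 ≤ birkhoffSum T φ N x) (n : ℕ) (x : X) :
    -(N * b) ≤ birkhoffSum T φ n x := by
  induction n using Nat.strong_induction_on generalizing x with
  | _ n ih =>
    obtain hn | hn := lt_or_ge n N
    · calc -(N * b) ≤ -(n * b) := by gcongr
        _ = ∑ _i ∈ Finset.range n, -b := by simp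
        _ ≤ birkhoffSum T φ n x := Finset.sum_le_sum fun i _ => hφ _
    · obtain ⟨k, rfl⟩ := Nat.exists_eq_add_of_le hn
      rw [birkhoffSum_add]
      linarith [hsum x, ih k (by omega) (T^[N] x)]

/-- `log |(F^n)'|` is the Birkhoff sum of `log |F'|`, where `Real.log` supplies the absolute
value. -/
theorem uniformlyExpanding_of_le_birkhoffSum_log_deriv {F : ℝ → ℝ} (hF : Differentiable ℝ F)
    (hne : ∀ x, deriv F x ≠ 0) {N : ℕ} (hN : 0 < N) {b σ : ℝ} (hb : 0 ≤ b) (hσ : 0 < σ)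
    (hlog : ∀ x, σ - b ≤ Real.log (deriv F x))
    (hsum : ∀ x, N * σ ≤ birkhoffSum F (fun x => Real.log (deriv F x)) N x) :
    UniformlyExpanding (Real.exp (-(N * b))) (Real.exp σ) F where
  pos := Real.exp_pos _
  one_lt := Real.one_lt_exp_iff.2 hσ
  mul_dist_le n := mul_dist_le_of_le_abs_deriv (hF.iterate n) fun x => by
    have hle := neg_mul_le_birkhoffSum (T := F) (φ := fun x => Real.log (deriv F x) - σ) hN hb
      (fun x => by linarith [hlog x])
      (fun x => by rw [birkhoffSum_sub_const]; linarith [hsum x]) n x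
    rw [birkhoffSum_sub_const, ← log_deriv_iterate hF hne] at hle
    rw [← Real.exp_log_eq_abs (deriv_iterate_ne_zero hF hne n x), ← Real.exp_nat_mul,
      ← Real.exp_add]
    exact Real.exp_le_exp.2 (by linarith)

theorem abs_log_sub_log_le {m x y : ℝ} (hm : 0 < m) (hx : m ≤ |x|) (hy : m ≤ |y|) :
    |Real.log x - Real.log y| ≤ |x - y| / m := by
  wlog hxy : Real.log y ≤ Real.log x generalizing x y
  · rw [abs_sub_comm, abs_sub_comm x]
    exact this hy hx (not_le.1 hxy).le
  have hx0 : 0 < |x| := hm.trans_le hx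
  have hy0 : 0 < |y| := hm.trans_le hy
  calc |Real.log x - Real.log y| = Real.log (|x| / |y|) := by
        rw [abs_of_nonneg (sub_nonneg.2 hxy), Real.log_div hx0.ne' hy0.ne', Real.log_abs,
          Real.log_abs]
    _ ≤ |x| / |y| - 1 := Real.log_le_sub_one_of_pos (by positivity)
    _ = (|x| - |y|) / |y| := by rw [sub_div, div_self hy0.ne']
    _ ≤ |x - y| / |y| := by gcongr; exact abs_sub_abs_le_abs_sub x y
    _ ≤ |x - y| / m := by gcongr

theorem tendstoUniformly_log {ι X : Type*} {V : Filter ι} {g : ι → X → ℝ} {g₀ : X → ℝ}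
    (hg : TendstoUniformly g g₀ V) {m : ℝ} (hm : 0 < m) (hg₀ : ∀ x, m ≤ |g₀ x|) :
    TendstoUniformly (fun i x => Real.log (g i x)) (fun x => Real.log (g₀ x)) V := by
  rw [Metric.tendstoUniformly_iff] at hg ⊢
  intro ε hε
  filter_upwards [hg (m / 2) (by positivity), hg (ε * (m / 2)) (by positivity)]
    with i hclose hdist x
  have hgi : m / 2 ≤ |g i x| := by
    have := abs_sub_abs_le_abs_sub (g₀ x) (g i x)
    have := hclose x
    rw [Real.dist_eq] at this
    linarith [hg₀ x]
  refine (abs_log_sub_log_le (half_pos hm) (by linarith [hg₀ x]) hgi).trans_lt ?_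
  rw [div_lt_iff₀ (half_pos hm)]
  exact hdist x

end LogDerivative

namespace ExpandingLift

variable {F F₀ : ℝ → ℝ}

theorem contDiff_one (h : ExpandingLift 1 F) : ContDiff ℝ 1 F := by exact_mod_cast h.1

theorem differentiable (h : ExpandingLift 1 F) : Differentiable ℝ F :=
  h.contDiff_one.differentiable one_ne_zero

theorem continuous_deriv (h : ExpandingLift 1 F) : Continuous (deriv F) :=
  h.contDiff_one.continuous_deriv le_rfl

theorem periodic_deriv {r : ℕ∞} (h : ExpandingLift r F) : Function.Periodic (deriv F) 1 :=
  h.2.1.elim fun _ hd => periodic_deriv_of_map_add hd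

theorem exists_pos_le_abs_deriv {r : ℕ∞} (h : ExpandingLift r F) :
    ∃ m > 0, ∀ x, m ≤ |deriv F x| := by
  obtain ⟨-, -, C, hC, l, hl, hexp⟩ := h
  exact ⟨C * l ^ 1, by positivity, hexp 1 le_rfl⟩

theorem deriv_ne_zero {r : ℕ∞} (h : ExpandingLift r F) (x : ℝ) : deriv F x ≠ 0 := by
  obtain ⟨m, hm, hmF⟩ := h.exists_pos_le_abs_deriv
  exact abs_pos.1 (hm.trans_le (hmF x))

theorem exists_lipschitzWith (h : ExpandingLift 1 F) : ∃ K, LipschitzWith K F :=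
  (exists_abs_le_of_periodic h.continuous_deriv h.periodic_deriv one_ne_zero).imp
    fun _ => lipschitzWith_of_abs_deriv_le h.differentiable

theorem exists_le_birkhoffSum_log_deriv (h : ExpandingLift 1 F) (a : ℝ) :
    ∃ N > 0, ∀ x, a ≤ birkhoffSum F (fun x => Real.log (deriv F x)) N x := by
  obtain ⟨-, -, C, hC, l, hl, hexp⟩ := id h
  obtain ⟨n, hn⟩ := pow_unbounded_of_one_lt (Real.exp a / C) hl
  refine ⟨n + 1, n.succ_pos, fun x => ?_⟩
  rw [← log_deriv_iterate h.differentiable h.deriv_ne_zero, ← Real.log_abs,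
    Real.le_log_iff_exp_le (abs_pos.2 (deriv_iterate_ne_zero h.differentiable h.deriv_ne_zero _ x))]
  calc Real.exp a ≤ C * l ^ n := by
        rw [mul_comm]
        exact (div_lt_iff₀ hC).1 hn |>.le
    _ ≤ C * l ^ (n + 1) := by gcongr; exacts [hl.le, n.le_succ]
    _ ≤ |deriv F^[n + 1] x| := hexp _ n.succ_pos x

theorem exists_eventually_uniformlyExpanding {ι : Type*} {V : Filter ι} {F : ι → ℝ → ℝ}
    (h₀ : ExpandingLift 1 F₀) (h : ∀ i, ExpandingLift 1 (F i)) (hF : TendstoUniformly F F₀ V)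
    (hF' : TendstoUniformly (fun i => deriv (F i)) (deriv F₀) V) :
    ∃ c l, ∀ᶠ i in V, UniformlyExpanding c l (F i) := by
  obtain ⟨m, hm, hmF⟩ := h₀.exists_pos_le_abs_deriv
  obtain ⟨K, hK⟩ := h₀.exists_lipschitzWith
  obtain ⟨N, hN, hsum₀⟩ := h₀.exists_le_birkhoffSum_log_deriv 2
  have hN' : (0 : ℝ) < N := Nat.cast_pos.2 hN
  have hlog := tendstoUniformly_log hF' hm hmF
  have huc : UniformContinuous fun x => Real.log (deriv F₀ x) :=
    uniformContinuous_of_periodic (p := 1) (h₀.continuous_deriv.log h₀.deriv_ne_zero)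
      (h₀.periodic_deriv.comp Real.log)
  have hsum := tendstoUniformly_birkhoffSum hF hK.uniformContinuous hlog huc N
  refine ⟨Real.exp (-(N * |(N : ℝ)⁻¹ + 1 - Real.log m|)), Real.exp (N : ℝ)⁻¹, ?_⟩
  filter_upwards [Metric.tendstoUniformly_iff.1 hlog 1 one_pos,
    Metric.tendstoUniformly_iff.1 hsum 1 one_pos] with i hlogi hsumi
  refine uniformlyExpanding_of_le_birkhoffSum_log_deriv (h i).differentiable (h i).deriv_ne_zero
    hN (abs_nonneg _) (by positivity) (fun x => ?_) fun x => ?_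
  · have hlogm : Real.log m ≤ Real.log (deriv F₀ x) := by
      rw [← Real.log_abs (deriv F₀ x)]
      exact Real.log_le_log hm (hmF x)
    linarith [le_abs_self ((N : ℝ)⁻¹ + 1 - Real.log m), (abs_lt.1 (hlogi x)).2]
  · rw [mul_inv_cancel₀ hN'.ne']
    linarith [hsum₀ x, (abs_lt.1 (hsumi x)).2]

end ExpandingLift

/-! ### Perturbations in the `C^1` topology -/

theorem eventually_lipschitzWith_of_tendstoUniformly_deriv {ι : Type*} {V : Filter ι}
    {f : ι → ℝ → ℝ} {f₀ : ℝ → ℝ} (hf : ∀ i, Differentiable ℝ (f i))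
    (h : TendstoUniformly (fun i => deriv (f i)) (deriv f₀) V) {K : ℝ≥0}
    (hK : ∀ x, |deriv f₀ x| ≤ K) : ∀ᶠ i in V, LipschitzWith (K + 1) (f i) := by
  filter_upwards [Metric.tendstoUniformly_iff.1 h 1 one_pos] with i hi
  refine lipschitzWith_of_abs_deriv_le (hf i) fun x => ?_
  have hlt := hi x
  rw [Real.dist_eq, abs_sub_comm] at hlt
  rw [NNReal.coe_add, NNReal.coe_one]
  linarith [hK x, abs_sub_abs_le_abs_sub (deriv (f i) x) (deriv f₀ x)]

theorem tendstoUniformly_of_continuous_crSeq {X : Type*} [TopologicalSpace X] {φ : X → ℝ → ℝ}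
    {r : ℕ∞} (h : Continuous fun x => crSeq r (φ x)) (x₀ : X) {k : ℕ} (hk : k ≤ r) :
    TendstoUniformly (fun x => iteratedDeriv k (φ x)) (iteratedDeriv k (φ x₀)) (𝓝 x₀) := by
  have hlim := ((continuous_apply k).comp h).tendsto x₀
  rw [UniformFun.tendsto_iff_tendstoUniformly] at hlim
  simpa only [crSeq, if_pos hk, Function.comp_def, UniformFun.toFun_ofFun] using hlim

namespace CrFun

theorem tendstoUniformly_lift {r : ℕ∞} (f₀ : CrFun r) :
    TendstoUniformly (fun (f : CrFun r) (x : ℝ) => f.1 x) (fun x => f₀.1 x) (𝓝 f₀) := by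
  simpa only [iteratedDeriv_zero] using tendstoUniformly_of_continuous_crSeq
    (φ := fun (f : CrFun r) (x : ℝ) => f.1 x) continuous_induced_dom f₀ (k := 0) bot_le

theorem tendstoUniformly {r : ℕ∞} (f₀ : CrFun r) :
    TendstoUniformly (fun f : CrFun r => f.1) f₀.1 (𝓝 f₀) := by
  rw [Metric.tendstoUniformly_iff]
  intro ε hε
  filter_upwards [Metric.tendstoUniformly_iff.1 f₀.tendstoUniformly_lift ε hε] with f hf x
  rw [← coe_rep x]
  exact hf (rep x)

theorem tendstoUniformly_deriv (f₀ : CrFun 1) :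
    TendstoUniformly (fun f : CrFun 1 => deriv fun x : ℝ => f.1 x) (deriv fun x : ℝ => f₀.1 x)
      (𝓝 f₀) := by
  simpa only [iteratedDeriv_one] using tendstoUniformly_of_continuous_crSeq
    (φ := fun (f : CrFun 1) (x : ℝ) => f.1 x) continuous_induced_dom f₀ (r := 1) (k := 1)
    Nat.cast_one.le

theorem contDiff_one (f : CrFun 1) : ContDiff ℝ 1 fun x : ℝ => f.1 x := by exact_mod_cast f.2

theorem exists_eventually_lipschitzWith (f₀ : CrFun 1) :
    ∃ K, ∀ᶠ f in 𝓝 f₀, LipschitzWith K f.1 := by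
  have hper : Function.Periodic (deriv fun x : ℝ => f₀.1 x) 1 :=
    periodic_deriv_of_map_add (d := 0) fun x => by rw [add_zero, AddCircle.coe_add_period]
  obtain ⟨K, hK⟩ := exists_abs_le_of_periodic (f₀.contDiff_one.continuous_deriv le_rfl) hper
    one_ne_zero
  exact ⟨K + 1, (eventually_lipschitzWith_of_tendstoUniformly_deriv
    (fun f : CrFun 1 => f.contDiff_one.differentiable one_ne_zero) f₀.tendstoUniformly_deriv
    hK).mono fun _ => lipschitzWith_of_comp_coe⟩

end CrFun

namespace ExpMap

theorem tendstoUniformly {r : ℕ∞} (F₀ : ExpMap r) :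
    TendstoUniformly (fun F : ExpMap r => F.1) F₀.1 (𝓝 F₀) := by
  simpa only [iteratedDeriv_zero] using tendstoUniformly_of_continuous_crSeq
    (φ := fun F : ExpMap r => F.1) continuous_induced_dom F₀ (k := 0) bot_le

theorem tendstoUniformly_cmap {r : ℕ∞} (F₀ : ExpMap r) :
    TendstoUniformly (fun F : ExpMap r => cmap F.1) (cmap F₀.1) (𝓝 F₀) := by
  rw [Metric.tendstoUniformly_iff]
  intro ε hε
  filter_upwards [Metric.tendstoUniformly_iff.1 F₀.tendstoUniformly ε hε] with F hF x
  exact (dist_coe_le _ _).trans_lt (hF (rep x))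

theorem tendstoUniformly_deriv (F₀ : ExpMap 1) :
    TendstoUniformly (fun F : ExpMap 1 => deriv F.1) (deriv F₀.1) (𝓝 F₀) := by
  simpa only [iteratedDeriv_one] using tendstoUniformly_of_continuous_crSeq
    (φ := fun F : ExpMap 1 => F.1) continuous_induced_dom F₀ (r := 1) (k := 1) Nat.cast_one.le

theorem exists_eventually_lipschitzWith (F₀ : ExpMap 1) :
    ∃ M, ∀ᶠ F in 𝓝 F₀, LipschitzWith M F.1 :=
  (exists_abs_le_of_periodic F₀.2.continuous_deriv F₀.2.periodic_deriv one_ne_zero).elim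
    fun M hM => ⟨M + 1, eventually_lipschitzWith_of_tendstoUniformly_deriv
      (fun F : ExpMap 1 => F.2.differentiable) F₀.tendstoUniformly_deriv hM⟩

theorem exists_eventually_uniformlyExpanding (F₀ : ExpMap 1) :
    ∃ c l, ∀ᶠ F in 𝓝 F₀, UniformlyExpanding c l F.1 :=
  F₀.2.exists_eventually_uniformlyExpanding (fun F : ExpMap 1 => F.2) F₀.tendstoUniformly
    F₀.tendstoUniformly_deriv

theorem exists_eventually_lipschitzWith_cmap (F₀ : ExpMap 1) :
    ∃ M, ∀ᶠ F in 𝓝 F₀, LipschitzWith M (cmap F.1) := by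
  obtain ⟨M, hM⟩ := F₀.exists_eventually_lipschitzWith
  refine ⟨M, hM.mono fun F hF => ?_⟩
  obtain ⟨d, hd⟩ := F.2.2.1
  exact lipschitzWith_cmap hd hF

theorem exists_eventually_expansiveWith_cmap (F₀ : ExpMap 1) :
    ∃ e > 0, ∀ᶠ F in 𝓝 F₀, ExpansiveWith e (cmap F.1) := by
  obtain ⟨M, hM⟩ := F₀.exists_eventually_lipschitzWith
  obtain ⟨c, l, hexp⟩ := F₀.exists_eventually_uniformlyExpanding
  have hMe : (M : ℝ) * (1 / (2 * (M + 1))) ≤ 1 / 2 := by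
    rw [mul_one_div, div_le_div_iff₀ (by positivity) two_pos]
    linarith
  refine ⟨1 / (2 * (M + 1)), by positivity, ?_⟩
  filter_upwards [hM, hexp] with F hMF hF
  obtain ⟨d, hd⟩ := F.2.2.1
  exact expansiveWith_cmap hd hMF hF hMe

theorem exists_eventually_shadowingWith_cmap (F₀ : ExpMap 1) :
    ∃ A, ∀ᶠ F in 𝓝 F₀, ShadowingWith A (cmap F.1) := by
  obtain ⟨M, hM⟩ := F₀.exists_eventually_lipschitzWith
  obtain ⟨c, l, hexp⟩ := F₀.exists_eventually_uniformlyExpanding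
  let A : ℝ≥0 := (c⁻¹ / (1 - l⁻¹)).toNNReal
  refine ⟨A * (A + 1), ?_⟩
  filter_upwards [hM, hexp] with F hMF hF
  obtain ⟨d, hd⟩ := F.2.2.1
  exact shadowingWith_cmap hMF hd hF (Real.le_coe_toNNReal _)

end ExpMap

/-- Lemma 2.6: the set of `(f,T) ∈ 𝓒^1 × 𝓔^1` such that `Ω(f,T)` is a periodic orbit of
`T` is open. -/
theorem omega_periodic_open :
    IsOpen {p : CrFun 1 × ExpMap 1 |
      IsPeriodicOrbit (cmap p.2.1) (OmegaSet p.1.1 (cmap p.2.1))} := by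
  refine isOpen_iff_mem_nhds.2 fun ⟨f₀, F₀⟩ ⟨o, ho, hΩ⟩ => ?_
  obtain ⟨K, hf⟩ := f₀.exists_eventually_lipschitzWith
  obtain ⟨M, hT⟩ := F₀.exists_eventually_lipschitzWith_cmap
  obtain ⟨A, hshadow⟩ := F₀.exists_eventually_shadowingWith_cmap
  obtain ⟨e, he, hexp⟩ := F₀.exists_eventually_expansiveWith_cmap
  have hfst : Tendsto Prod.fst (𝓝 (f₀, F₀)) (𝓝 f₀) := continuous_fst.tendsto _
  have hsnd : Tendsto Prod.snd (𝓝 (f₀, F₀)) (𝓝 F₀) := continuous_snd.tendsto _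
  have hnorm : ∀ᶠ p in 𝓝 (f₀, F₀),
      NormalizedPair A K (cmap p.2.1) fun x => p.1.1 x - beta p.1.1 (cmap p.2.1) := by
    filter_upwards [hfst.eventually hf, hsnd.eventually hshadow] with p hpf hpT
    exact hpT.normalizedPair hpf
  exact eventually_nonwanderingSet_eq_forwardOrbit hnorm hnorm.self_of_nhds
    (fun u hu => hsnd.eventually (F₀.tendstoUniformly_cmap u hu))
    (fun u hu => hfst.eventually (f₀.tendstoUniformly u hu))
    (hsnd.eventually hT) he (hsnd.eventually hexp) ho hΩ
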